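/- arXiv:1211.2864 — 5 statements merged into one kernel-verified Lean document; each statement's English description precedes it below -/
import Mathlib

section
/- The cardinalities of T_1, T_2, T_3 are |T_1| = 2^s + 1, |T_2| = 2^{2s−1} + 2^{s−1}, and |T_3| = 2^{2s−1} − 2^{s−1}. -/
noncomputable section

open scoped BigOperators

/-- `M = 2^{2s} + 2^s + 1`. -/
abbrev Mof (s : ℕ) : ℕ := 2 ^ (2 * s) + 2 ^ s + 1

/-- The relative trace from `F` (of order `2^{3s}`) to its subfield `E` of order `2^s`:
`Tr_{F/E}(x) = x + x^{2^s} + x^{2^{2s}}`, viewed as a map `F → F`. -/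
def trFE {F : Type*} [Field F] (s : ℕ) (x : F) : F :=
  x + x ^ (2 ^ s) + x ^ (2 ^ (2 * s))

/-- `ψ(x) = 1` if the absolute trace `Tr_{F/𝔽₂}(x) = 0`, and `-1` otherwise. -/
def psi (F : Type*) [Field F] [Algebra (ZMod 2) F] (x : F) : ℤ :=
  if Algebra.trace (ZMod 2) F x = 0 then 1 else -1

/-- `ψ(cS) = ∑_{x ∈ S} ψ(c·x)`. -/
def psiSum (F : Type*) [Field F] [Algebra (ZMod 2) F] (c : F) (S : Set F) : ℤ :=
  ∑ᶠ x ∈ S, psi F (c * x)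

/-- `D = {u ∈ F^× : Tr_{F/E}(u⁻¹) = 0}`. -/
def Dset (F : Type*) [Field F] (s : ℕ) : Set F :=
  {u | u ≠ 0 ∧ trFE s u⁻¹ = 0}

/-- `S_a = {u ∈ F^× : Tr_{F/E}(u^{2^s+1}) = 0 ∧ Tr_{F/E}(ω^a u) = 0}`. -/
def Sa {F : Type*} [Field F] (s : ℕ) (ω : F) (a : ℤ) : Set F :=
  {u | u ≠ 0 ∧ trFE s (u ^ (2 ^ s + 1)) = 0 ∧ trFE s (ω ^ a * u) = 0}

/-- `T₁ ⊆ ℤ/Mℤ`: classes `a` with `|S_a| = 2^s - 1`. -/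
def T1 {F : Type*} [Field F] (s : ℕ) (ω : F) : Set (ZMod (Mof s)) :=
  {x | (Sa s ω (x.val : ℤ)).ncard = 2 ^ s - 1}

/-- `T₂ ⊆ ℤ/Mℤ`: classes `a` with `|S_a| = 2(2^s - 1)`. -/
def T2 {F : Type*} [Field F] (s : ℕ) (ω : F) : Set (ZMod (Mof s)) :=
  {x | (Sa s ω (x.val : ℤ)).ncard = 2 * (2 ^ s - 1)}

/-- `T₃ ⊆ ℤ/Mℤ`: classes `a` with `|S_a| = 0`. -/
def T3 {F : Type*} [Field F] (s : ℕ) (ω : F) : Set (ZMod (Mof s)) :=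
  {x | (Sa s ω (x.val : ℤ)).ncard = 0}

/-- The cyclotomic class `C_i^{(M,K)} = {g^{i+Mt} : t ∈ ℤ}`. -/
def cyc {K : Type*} [Field K] (M : ℕ) (g : K) (i : ℤ) : Set K :=
  {x | ∃ t : ℤ, x = g ^ (i + (M : ℤ) * t)}

/-- `⋃_{i ∈ T} C_i^{(M,K)}` for a set `T ⊆ ℤ/Mℤ` of indices. -/
def Rclass {K : Type*} [Field K] (s : ℕ) (g : K) (T : Set (ZMod (Mof s))) : Set K :=
  ⋃ i ∈ T, cyc (Mof s) g ((i.val : ℤ))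

/-- The family `R_0 = {0}`, `R_k = ⋃_{i ∈ T_k} C_i^{(M,K)}`, `k = 1, 2, 3`. -/
def Rfam {F K : Type*} [Field F] [Field K] (s : ℕ) (ω : F) (g : K) : Fin 4 → Set K :=
  ![{0}, Rclass s g (T1 s ω), Rclass s g (T2 s ω), Rclass s g (T3 s ω)]

/-- Indicator `[P] = 1` if `P` holds, `0` otherwise. -/
def Ind (P : Prop) : ℤ := @ite ℤ P (Classical.propDecidable P) 1 0

namespace Conic
variable {F : Type*} [Field F]

def tr (σ : F →+* F) (x : F) : F := x + σ x + σ (σ x)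
def Q (σ : F →+* F) (u : F) : F := u * σ u + σ u * σ (σ u) + σ (σ u) * u
def S (σ : F →+* F) (b : F) : Set F := {u | u ≠ 0 ∧ Q σ u = 0 ∧ tr σ (b * u) = 0}

variable {σ : F →+* F}

lemma tr_add (x y : F) : tr σ (x + y) = tr σ x + tr σ y := by
  simp only [tr, map_add]; ring

lemma tr_mul {e : F} (he : σ e = e) (x : F) : tr σ (e * x) = e * tr σ x := by
  simp only [tr, map_mul, he]; ring

lemma Q_mul {e : F} (he : σ e = e) (x : F) : Q σ (e * x) = e ^ 2 * Q σ x := by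
  simp only [Q, map_mul, he]; ring

lemma tr_fix (h3 : ∀ x, σ (σ (σ x)) = x) (x : F) : σ (tr σ x) = tr σ x := by
  simp only [tr, map_add, h3]; ring

lemma Q_fix (h3 : ∀ x, σ (σ (σ x)) = x) (x : F) : σ (Q σ x) = Q σ x := by
  simp only [Q, map_add, map_mul, h3]; ring

lemma tr_E (h2 : (2 : F) = 0) {e : F} (he : σ e = e) : tr σ e = e := by
  simp only [tr, he]; linear_combination e * h2

lemma self_add (h2 : (2 : F) = 0) (x : F) : x + x = 0 := by
  linear_combination x * h2

/-- `Q (e + w) = e^2 + Q w` for `e ∈ E`. -/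
lemma Q_add_E (h2 : (2 : F) = 0) {e : F} (he : σ e = e) (w : F) :
    Q σ (e + w) = e ^ 2 + Q σ w := by
  simp only [Q, map_add, he]; linear_combination (e ^ 2 + e * (w + σ w + σ (σ w))) * h2

/-- polarization. -/
lemma Q_add (h2 : (2 : F) = 0) (x y : F) :
    Q σ (x + y) = Q σ x + Q σ y + (tr σ x * tr σ y + tr σ (x * y)) := by
  simp only [Q, tr, map_add, map_mul]
  linear_combination (-(x * y + σ x * σ y + σ (σ x) * σ (σ y))) * h2

lemma tr_W (h2 : (2 : F) = 0) (h3 : ∀ x, σ (σ (σ x)) = x) (u : F) : tr σ (u + tr σ u) = 0 := by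
  rw [tr_add, tr_E h2 (tr_fix h3 u), self_add h2]

/-- two orthogonal trace zero elements are proportional. -/
lemma prop_W (h2 : (2 : F) = 0) {b w : F} (hb : tr σ b = 0) (hb0 : b ≠ 0) (hw : tr σ w = 0)
    (h : tr σ (b * w) = 0) : ∃ c, σ c = c ∧ w = c * b := by
  refine ⟨w / b, ?_, by field_simp⟩
  have hsb : σ b ≠ 0 := by simpa using hb0
  rw [map_div₀, div_eq_div_iff hsb hb0]
  simp only [tr, map_mul] at hb hw h
  linear_combination h - σ (σ w) * hb + (b + σ b) * hw - (b * w + σ b * σ w + σ b * w) * h2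

lemma ncard_line [Finite F] {q : ℕ} (hE : {x : F | σ x = x}.ncard = q) {v : F} (hv : v ≠ 0) :
    {u : F | u ≠ 0 ∧ ∃ c, σ c = c ∧ u = c * v}.ncard = q - 1 := by
  have h : {u : F | u ≠ 0 ∧ ∃ c, σ c = c ∧ u = c * v} = (fun c => c * v) '' ({x : F | σ x = x} \ {0}) := by
    ext u
    simp only [Set.mem_ofPred_eq, Set.mem_image, Set.mem_sdiff, Set.mem_singleton_iff]
    constructor
    · rintro ⟨h0, c, hc, rfl⟩
      exact ⟨c, ⟨hc, left_ne_zero_of_mul h0⟩, rfl⟩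
    · rintro ⟨c, ⟨hc, h0⟩, rfl⟩
      exact ⟨mul_ne_zero h0 hv, c, hc, rfl⟩
  rw [h, Set.ncard_image_of_injective _ (mul_left_injective₀ hv),
    Set.ncard_sdiff_singleton_of_mem (by simp), hE]

lemma exists_sqrt [Finite F] (h2 : (2 : F) = 0) {x : F} (hx : σ x = x) : ∃ r, σ r = r ∧ r ^ 2 = x := by
  have inj : Function.Injective (fun r : F => r ^ 2) := by
    intro a b h
    have : (a - b) ^ 2 = 0 := by
      simp only at h
      linear_combination h + (b ^ 2 - a * b) * h2
    exact sub_eq_zero.mp (pow_eq_zero_iff (by norm_num) |>.mp this)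
  obtain ⟨r, hr⟩ := (Finite.injective_iff_surjective.mp inj) x
  refine ⟨r, inj ?_, hr⟩
  simp only at hr ⊢
  rw [← map_pow, hr, hx]

lemma ncard_tang [Finite F] (h2 : (2 : F) = 0) (h3 : ∀ x, σ (σ (σ x)) = x) {q : ℕ}
    (hE : {x : F | σ x = x}.ncard = q) {b : F} (hb0 : b ≠ 0) (hb : tr σ b = 0) :
    (S σ b).ncard = q - 1 := by
  obtain ⟨r, hr, hr2⟩ := exists_sqrt h2 (Q_fix h3 b)
  have hv : r + b ≠ 0 := by
    intro h
    have hbr : b = r := by linear_combination h - r * h2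
    rw [hbr, tr_E h2 hr] at hb
    exact hb0 (hbr.trans hb)
  have hQv : Q σ (r + b) = 0 := by
    rw [Q_add_E h2 hr, hr2, self_add h2]
  rw [← ncard_line hE hv]
  congr 1
  ext u
  simp only [S, Set.mem_ofPred_eq]
  refine and_congr_right fun hu => ⟨?_, ?_⟩
  · rintro ⟨hQ, ht⟩
    have hte := tr_fix h3 u
    have h1 : tr σ (b * (u + tr σ u)) = 0 := by
      rw [mul_add, tr_add, ht, mul_comm, tr_mul hte, hb]; simp
    obtain ⟨c, hc, hcb⟩ := prop_W h2 hb hb0 (tr_W h2 h3 u) h1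
    have hu' : u = tr σ u + c * b := by rw [← hcb]; linear_combination (- tr σ u) * h2
    refine ⟨c, hc, ?_⟩
    have : (tr σ u - c * r) ^ 2 = 0 := by
      rw [hu', Q_add_E h2 hte, Q_mul hc, ← hr2] at hQ
      linear_combination hQ - (tr σ u * c * r) * h2
    have := sub_eq_zero.mp (pow_eq_zero_iff (by norm_num) |>.mp this)
    rw [hu', this]; ring
  · rintro ⟨c, hc, rfl⟩
    refine ⟨by rw [Q_mul hc, hQv, mul_zero], ?_⟩
    have hbb : tr σ (b * b) = 0 := by
      simp only [tr, map_mul] at hb ⊢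
      linear_combination (b + σ b + σ (σ b)) * hb - (b * σ b + σ b * σ (σ b) + b * σ (σ b)) * h2
    rw [show b * (c * (r + b)) = c * (r * b + b * b) by ring, tr_mul hc, tr_add, tr_mul hr, hb, hbb]
    simp

lemma ncard_sec [Finite F] (h2 : (2 : F) = 0) (h3 : ∀ x, σ (σ (σ x)) = x) {q : ℕ} (hq : 2 ≤ q)
    (hE : {x : F | σ x = x}.ncard = q) (hW : {x : F | tr σ x = 0}.ncard = q ^ 2)
    {b : F} (hb : tr σ b ≠ 0) :
    (S σ b).ncard = 0 ∨ (S σ b).ncard = 2 * (q - 1) := by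
  have hb0 : b ≠ 0 := by rintro rfl; simp [tr] at hb
  rcases Set.eq_empty_or_nonempty (S σ b) with h | ⟨u0, hu0, hQ0, ht0⟩
  · left; rw [h, Set.ncard_empty]
  right
  set φ : F → F := fun u => tr σ u0 * tr σ u + tr σ (u0 * u) with hφ
  have φfix : ∀ u, σ (φ u) = φ u := by
    intro u; simp only [hφ, map_add, map_mul, tr_fix h3]
  have φadd : ∀ u v, φ (u + v) = φ u + φ v := by
    intro u v; simp only [hφ, tr_add, mul_add]; ring
  have φmul : ∀ c u, σ c = c → φ (c * u) = c * φ u := by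
    intro c u hc; simp only [hφ, mul_left_comm u0 c u, tr_mul hc]; ring
  have φ0 : φ u0 = 0 := by
    simp only [hφ, tr, map_mul]
    linear_combination (u0 ^ 2 + σ u0 ^ 2 + σ (σ u0) ^ 2 + u0 * σ u0 + σ u0 * σ (σ u0) + σ (σ u0) * u0) * h2
  have hw0 : u0 + tr σ u0 ≠ 0 := by
    intro h
    have h' : u0 = tr σ u0 := by linear_combination h - tr σ u0 * h2
    have h'' := tr_fix h3 u0
    rw [← h'] at h''
    simp only [Q, h''] at hQ0
    exact hu0 (pow_eq_zero_iff (two_ne_zero) |>.mp (by linear_combination hQ0 - u0 ^ 2 * h2))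
  have ker : ∀ u, tr σ (b * u) = 0 → φ u = 0 → ∃ c, σ c = c ∧ u = c * u0 := by
    intro u hu hφu
    have e1 : tr σ ((u0 + tr σ u0) * (u + tr σ u)) = 0 := by
      rw [show (u0 + tr σ u0) * (u + tr σ u) = u0 * u + tr σ u0 * u + tr σ u * u0 + tr σ u0 * tr σ u by ring,
        tr_add, tr_add, tr_add, tr_mul (tr_fix h3 _), tr_mul (tr_fix h3 _), tr_mul (tr_fix h3 _),
        tr_E h2 (tr_fix h3 _)]
      simp only [hφ] at hφu
      linear_combination hφu + tr σ u0 * tr σ u * h2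
    obtain ⟨c, hc, h⟩ := prop_W h2 (tr_W h2 h3 u0) hw0 (tr_W h2 h3 u) e1
    refine ⟨c, hc, ?_⟩
    set e := c * tr σ u0 + tr σ u with he
    have hee : σ e = e := by simp only [he, map_add, map_mul, hc, tr_fix h3]
    have hu' : u = c * u0 + e := by rw [he]; linear_combination h - tr σ u * h2
    rw [hu', mul_add, tr_add, mul_left_comm, tr_mul hc, ht0, mul_comm b e, tr_mul hee] at hu
    have : e = 0 := by
      rcases mul_eq_zero.mp (by simpa using hu : e * tr σ b = 0) with h | h
      · exact h
      · exact absurd h hb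
    rw [hu', this, add_zero]
  obtain ⟨v, hv, hφv⟩ : ∃ v, tr σ (b * v) = 0 ∧ φ v ≠ 0 := by
    by_contra! hcon
    have hsub : {x : F | tr σ x = 0} ⊆ (fun c => b * (c * u0)) '' {x : F | σ x = x} := by
      intro x hx
      have hx' : tr σ (b * (x / b)) = 0 := by rw [mul_div_cancel₀ _ hb0]; exact hx
      obtain ⟨c, hc, h⟩ := ker _ hx' (hcon _ hx')
      exact ⟨c, hc, by simp only; rw [← h, mul_div_cancel₀ _ hb0]⟩
    have h1 := (Set.ncard_le_ncard hsub (Set.toFinite _)).trans (Set.ncard_image_le (Set.toFinite _))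
    rw [hW, hE] at h1
    nlinarith
  have hinv : ∀ x : F, σ x = x → σ x⁻¹ = x⁻¹ := fun x hx => by rw [map_inv₀, hx]
  set v1 := (φ v)⁻¹ * v with hv1
  have hv1b : tr σ (b * v1) = 0 := by
    rw [hv1, mul_left_comm, tr_mul (hinv _ (φfix v)), hv, mul_zero]
  have hv1φ : φ v1 = 1 := by rw [hv1, φmul _ _ (hinv _ (φfix v)), inv_mul_cancel₀ hφv]
  set u1 := Q σ v1 * u0 + v1 with hu1
  have hu1b : tr σ (b * u1) = 0 := by
    rw [hu1, mul_add, tr_add, mul_left_comm, tr_mul (Q_fix h3 _), ht0, hv1b]; simp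
  have hu1φ : φ u1 = 1 := by rw [hu1, φadd, φmul _ _ (Q_fix h3 _), φ0, hv1φ]; simp
  have polar : ∀ c d w, σ c = c → σ d = d → Q σ (c * u0 + d * w) = d ^ 2 * Q σ w + c * d * φ w := by
    intro c d w hc hd
    rw [Q_add h2, Q_mul hc, Q_mul hd, hQ0, tr_mul hc, tr_mul hd,
      show c * u0 * (d * w) = c * (d * (u0 * w)) by ring, tr_mul hc, tr_mul hd]
    simp only [hφ]; ring
  have hQ1 : Q σ u1 = 0 := by
    have := polar (Q σ v1) 1 v1 (Q_fix h3 _) (map_one _)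
    rw [one_mul] at this
    rw [hu1, this, hv1φ]
    linear_combination Q σ v1 * h2
  have hu10 : u1 ≠ 0 := by
    intro h; rw [h] at hu1φ
    simp [hφ, tr] at hu1φ
  have hS : S σ b = {u : F | u ≠ 0 ∧ ∃ c, σ c = c ∧ u = c * u0} ∪
      {u : F | u ≠ 0 ∧ ∃ c, σ c = c ∧ u = c * u1} := by
    ext u
    simp only [S, Set.mem_ofPred_eq, Set.mem_union]
    constructor
    · rintro ⟨hu, hQu, htu⟩
      have k1 : tr σ (b * (u + φ u * u1)) = 0 := by
        rw [mul_add, tr_add, mul_left_comm, tr_mul (φfix u), htu, hu1b]; simp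
      have k2 : φ (u + φ u * u1) = 0 := by
        rw [φadd, φmul _ _ (φfix u), hu1φ, mul_one, self_add h2]
      obtain ⟨c, hc, h⟩ := ker _ k1 k2
      have hu' : u = c * u0 + φ u * u1 := by linear_combination h - φ u * u1 * h2
      have hQ' := polar c (φ u) u1 hc (φfix u)
      rw [← hu', hQu, hQ1, hu1φ] at hQ'
      rcases mul_eq_zero.mp (by linear_combination -hQ' : c * φ u = 0) with h0 | h0
      · right; refine ⟨hu, φ u, φfix u, ?_⟩
        rw [h0] at hu'; linear_combination hu'
      · left; refine ⟨hu, c, hc, ?_⟩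
        rw [h0] at hu'; linear_combination hu'
    · rintro (⟨hu, c, hc, rfl⟩ | ⟨hu, c, hc, rfl⟩)
      · exact ⟨hu, by rw [Q_mul hc, hQ0, mul_zero], by rw [mul_left_comm, tr_mul hc, ht0, mul_zero]⟩
      · exact ⟨hu, by rw [Q_mul hc, hQ1, mul_zero], by rw [mul_left_comm, tr_mul hc, hu1b, mul_zero]⟩
  rw [hS, Set.ncard_union_eq _ (Set.toFinite _) (Set.toFinite _), ncard_line hE hu0, ncard_line hE hu10]
  · ring
  · rw [Set.disjoint_left]
    rintro u ⟨hu, c, hc, rfl⟩ ⟨-, d, hd, h⟩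
    have := congrArg φ h
    rw [φmul _ _ hc, φmul _ _ hd, φ0, hu1φ, mul_zero, mul_one] at this
    rw [← this, zero_mul] at h
    exact hu h

/-- the zeros of `Q` are in bijection with the trace zero hyperplane. -/
lemma ncard_Q [Finite F] (h2 : (2 : F) = 0) (h3 : ∀ x, σ (σ (σ x)) = x) {n : ℕ}
    (hW : {x : F | tr σ x = 0}.ncard = n) : {u : F | Q σ u = 0}.ncard = n := by
  rw [← hW]
  refine Set.ncard_congr (fun u _ => u + tr σ u) ?_ ?_ ?_
  · intro u _; exact tr_W h2 h3 u
  · intro u v hu hv h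
    simp only [Set.mem_ofPred_eq] at hu hv
    have hd : u = (tr σ u + tr σ v) + v := by linear_combination h - tr σ u * h2
    have he : σ (tr σ u + tr σ v) = tr σ u + tr σ v := by simp only [map_add, tr_fix h3]
    rw [hd, Q_add_E h2 he, hv, add_zero] at hu
    rw [hd, pow_eq_zero_iff (two_ne_zero) |>.mp hu, zero_add]
  · intro w hw
    obtain ⟨r, hr, hr2⟩ := exists_sqrt h2 (Q_fix h3 w)
    refine ⟨r + w, ?_, ?_⟩
    · simp only [Set.mem_ofPred_eq]; rw [Q_add_E h2 hr, hr2, self_add h2]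
    · rw [tr_add, tr_E h2 hr, hw]; linear_combination r * h2

lemma ncard_ne_zero [Finite F] {P : F → Prop} (h0 : P 0) {n : ℕ} (h : {x : F | P x}.ncard = n) :
    {x : F | x ≠ 0 ∧ P x}.ncard = n - 1 := by
  have : {x : F | x ≠ 0 ∧ P x} = {x : F | P x} \ {0} := by
    ext x; simp [and_comm]
  rw [this, Set.ncard_sdiff_singleton_of_mem (s := {x : F | P x}) h0, h]

lemma ncard_dual [Finite F] {n : ℕ} (hW : {x : F | tr σ x = 0}.ncard = n) {u : F} (hu : u ≠ 0) :
    {b : F | b ≠ 0 ∧ tr σ (b * u) = 0}.ncard = n - 1 := by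
  refine ncard_ne_zero (by simp [tr]) ?_
  rw [← hW, ← Set.ncard_image_of_injective {b : F | tr σ (b * u) = 0} (mul_left_injective₀ hu)]
  congr 1
  ext x
  simp only [Set.mem_image, Set.mem_ofPred_eq]
  constructor
  · rintro ⟨b, hb, rfl⟩; exact hb
  · intro hx; exact ⟨x / u, by rw [div_mul_cancel₀ _ hu]; exact hx, by rw [div_mul_cancel₀ _ hu]⟩

open Classical in
lemma double_count [Fintype F] (h2 : (2 : F) = 0) (h3 : ∀ x, σ (σ (σ x)) = x) {n : ℕ}
    (hW : {x : F | tr σ x = 0}.ncard = n) :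
    ∑ b ∈ Finset.univ.filter (fun b : F => b ≠ 0), (S σ b).ncard = (n - 1) * (n - 1) := by
  have key := Finset.sum_card_bipartiteAbove_eq_sum_card_bipartiteBelow
    (s := Finset.univ.filter (fun b : F => b ≠ 0))
    (t := Finset.univ.filter (fun u : F => u ≠ 0 ∧ Q σ u = 0)) (fun b u => tr σ (b * u) = 0)
  have e1 : ∀ b : F, (S σ b).ncard = (Finset.bipartiteAbove (fun b u => tr σ (b * u) = 0)
      (Finset.univ.filter (fun u : F => u ≠ 0 ∧ Q σ u = 0)) b).card := by
    intro b
    rw [← Set.ncard_coe_finset]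
    congr 1
    ext u
    simp [Finset.bipartiteAbove, S, and_assoc]
  rw [Finset.sum_congr rfl (fun b _ => e1 b), key, Finset.sum_congr rfl (g := fun _ => n - 1),
    Finset.sum_const, smul_eq_mul]
  · congr 1
    rw [← ncard_ne_zero (by simp [Q]) (ncard_Q h2 h3 hW), ← Set.ncard_coe_finset]
    congr 1
    ext u; simp
  · intro u hu
    simp only [Finset.mem_filter, Finset.mem_univ, true_and] at hu
    rw [← ncard_dual hW hu.1, ← Set.ncard_coe_finset]
    congr 1
    ext u; simp [Finset.bipartiteBelow]

open Classical in
lemma count_A2 [Fintype F] (h2 : (2 : F) = 0) (h3 : ∀ x, σ (σ (σ x)) = x) {q : ℕ} (hq : 2 ≤ q)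
    (hE : {x : F | σ x = x}.ncard = q) (hW : {x : F | tr σ x = 0}.ncard = q ^ 2) :
    {b : F | b ≠ 0 ∧ (S σ b).ncard = q - 1}.ncard = q ^ 2 - 1 ∧
    {b : F | b ≠ 0 ∧ (S σ b).ncard = 2 * (q - 1)}.ncard * 2 = q * (q ^ 2 - 1) := by
  have tri : ∀ b : F, b ≠ 0 → ((S σ b).ncard = q - 1 ↔ tr σ b = 0) := by
    intro b hb
    constructor
    · intro h
      by_contra hc
      rcases ncard_sec h2 h3 hq hE hW hc with h' | h' <;> omega
    · exact ncard_tang h2 h3 hE hb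
  have h1 : {b : F | b ≠ 0 ∧ (S σ b).ncard = q - 1}.ncard = q ^ 2 - 1 := by
    rw [← ncard_ne_zero (by simp [tr]) hW]
    congr 1
    ext b
    exact and_congr_right (tri b)
  refine ⟨h1, ?_⟩
  have dc := double_count h2 h3 hW
  have e : ∀ b ∈ Finset.univ.filter (fun b : F => b ≠ 0), (S σ b).ncard =
      (if (S σ b).ncard = q - 1 then q - 1 else 0) +
      (if (S σ b).ncard = 2 * (q - 1) then 2 * (q - 1) else 0) := by
    intro b hb
    simp only [Finset.mem_filter, Finset.mem_univ, true_and] at hb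
    by_cases hc : tr σ b = 0
    · have := (tri b hb).2 hc
      rw [this, if_pos rfl, if_neg (by omega), add_zero]
    · rcases ncard_sec h2 h3 hq hE hW hc with h' | h' <;> rw [h'] <;> split_ifs <;> omega
  rw [Finset.sum_congr rfl e, Finset.sum_add_distrib, ← Finset.sum_filter, ← Finset.sum_filter,
    Finset.sum_const, Finset.sum_const, Finset.filter_filter, Finset.filter_filter,
    ← Set.ncard_coe_finset, ← Set.ncard_coe_finset] at dc
  simp only [Finset.coe_filter, Finset.mem_univ, true_and, smul_eq_mul] at dc
  rw [h1] at dc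
  generalize {b : F | b ≠ 0 ∧ (S σ b).ncard = 2 * (q - 1)}.ncard = A at dc ⊢
  obtain ⟨k, rfl⟩ : ∃ k, q = k + 1 := ⟨q - 1, by omega⟩
  have hk : (k + 1) ^ 2 - 1 = k * (k + 2) := by
    rw [Nat.sub_eq_iff_eq_add (Nat.one_le_pow _ _ (by omega))]; ring
  rw [hk] at dc ⊢
  simp only [Nat.add_sub_cancel] at dc
  have : k ≠ 0 := by omega
  apply Nat.eq_of_mul_eq_mul_right (Nat.pos_of_ne_zero this)
  nlinarith

/-- passing from nonzero field elements to exponents modulo `M`. -/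
lemma transfer [Fintype F] {q M : ℕ} [NeZero M] (hq : 2 ≤ q) (hM : M * (q - 1) = q ^ 3 - 1)
    (hF : Fintype.card F = q ^ 3) (hσ : ∀ x, σ x = x ^ q)
    (hE : {x : F | σ x = x}.ncard = q) {ω : F} (hω : ∀ x : F, x ≠ 0 → ∃ n : ℕ, x = ω ^ n)
    (P : F → Prop) (hP : ∀ e b, e ≠ 0 → σ e = e → P b → P (e * b)) :
    {b : F | b ≠ 0 ∧ P b}.ncard = {x : ZMod M | P (ω ^ (x.val : ℤ))}.ncard * (q - 1) := by
  have hM0 : 0 < M := Nat.pos_of_ne_zero (NeZero.ne M)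
  have hM1 : 1 < q ^ 3 - 1 := by
    have : 2 ^ 3 ≤ q ^ 3 := Nat.pow_le_pow_left hq 3
    omega
  have hω0 : ω ≠ 0 := by
    rintro rfl
    -- every nonzero element would be 1
    have hall : ∀ x : F, x = 0 ∨ x = 1 := by
      intro x
      by_cases hx : x = 0
      · exact Or.inl hx
      · obtain ⟨n, hn⟩ := hω x hx
        rcases Nat.eq_zero_or_pos n with h | h
        · right; rw [hn, h, pow_zero]
        · exact absurd (by rw [hn, zero_pow (by omega)]) hx
    classical
    have : (Finset.univ : Finset F) ⊆ {0, 1} := by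
      intro x _; simpa using hall x
    have := (Finset.card_le_card this).trans Finset.card_le_two
    rw [Finset.card_univ, hF] at this
    omega
  have hord : orderOf ω = q ^ 3 - 1 := by
    have h1 : orderOf (Units.mk0 ω hω0) = Nat.card Fˣ := by
      apply orderOf_eq_card_of_forall_mem_zpowers
      intro x
      obtain ⟨n, hn⟩ := hω x x.ne_zero
      exact ⟨n, by ext; simp [hn]⟩
    rw [← orderOf_units, Units.val_mk0] at h1
    classical
    rw [h1, Nat.card_eq_fintype_card, Fintype.card_units, hF]
  set E1 : Set F := {x : F | x ≠ 0 ∧ σ x = x} with hE1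
  have hE1c : E1.ncard = q - 1 := ncard_ne_zero (by simp) hE
  have hpow : ∀ e ∈ E1, e ^ (q - 1) = 1 := by
    rintro e ⟨h0, he⟩
    rw [hσ] at he
    apply mul_right_cancel₀ h0
    rw [← pow_succ, Nat.sub_add_cancel (by omega), he, one_mul]
  let f : ZMod M × F → F := fun p => p.2 * ω ^ p.1.val
  have finj : Set.InjOn f (Set.univ ×ˢ E1) := by
    rintro ⟨x, e⟩ ⟨-, he⟩ ⟨y, d⟩ ⟨-, hd⟩ h
    simp only [f] at h he hd
    have h' := congrArg (fun z => z ^ (q - 1)) h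
    simp only [mul_pow, hpow e he, hpow d hd, one_mul, ← pow_mul] at h'
    have h' : (Units.mk0 ω hω0) ^ (x.val * (q - 1)) = (Units.mk0 ω hω0) ^ (y.val * (q - 1)) := by
      ext; simpa using h'
    rw [pow_inj_mod, ← orderOf_units, Units.val_mk0, hord, ← hM] at h'
    have hxy : x.val = y.val := by
      rw [Nat.mul_mod_mul_right, Nat.mul_mod_mul_right, Nat.mod_eq_of_lt (ZMod.val_lt x),
        Nat.mod_eq_of_lt (ZMod.val_lt y)] at h'
      exact Nat.eq_of_mul_eq_mul_right (by omega) h'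
    have hxy' : x = y := ZMod.val_injective M hxy
    subst hxy'
    have := mul_right_cancel₀ (pow_ne_zero _ hω0) h
    rw [this]
  have fsurj : f '' (Set.univ ×ˢ E1) = {b : F | b ≠ 0} := by
    apply Set.eq_of_subset_of_ncard_le
    · rintro _ ⟨⟨x, e⟩, ⟨-, he⟩, rfl⟩
      exact mul_ne_zero he.1 (pow_ne_zero _ hω0)
    · rw [Set.InjOn.ncard_image finj, Set.ncard_prod, Set.ncard_univ, Nat.card_zmod, hE1c, hM]
      have : {b : F | b ≠ 0} = ({0} : Set F)ᶜ := by ext; simp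
      rw [this, Set.ncard_compl, Set.ncard_singleton, Nat.card_eq_fintype_card, hF]
    · exact Set.toFinite _
  have himg : {b : F | b ≠ 0 ∧ P b} = f '' ({x : ZMod M | P (ω ^ (x.val : ℤ))} ×ˢ E1) := by
    ext b
    constructor
    · rintro ⟨hb, hPb⟩
      have : b ∈ f '' (Set.univ ×ˢ E1) := by rw [fsurj]; exact hb
      obtain ⟨⟨x, e⟩, ⟨-, he⟩, rfl⟩ := this
      refine ⟨⟨x, e⟩, ⟨?_, he⟩, rfl⟩
      have := hP e⁻¹ _ (inv_ne_zero he.1) (by rw [map_inv₀, he.2]) hPb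
      simp only [f] at this
      rw [inv_mul_cancel_left₀ he.1] at this
      simp only [Set.mem_ofPred_eq, zpow_natCast]; exact this
    · rintro ⟨⟨x, e⟩, ⟨hx, he⟩, rfl⟩
      refine ⟨mul_ne_zero he.1 (pow_ne_zero _ hω0), hP _ _ he.1 he.2 ?_⟩
      simp only [Set.mem_ofPred_eq, zpow_natCast] at hx; exact hx
  rw [himg, Set.InjOn.ncard_image (finj.mono (Set.prod_mono (Set.subset_univ _) subset_rfl)),
    Set.ncard_prod, hE1c]

lemma S_smul {e b : F} (he0 : e ≠ 0) (he : σ e = e) : S σ (e * b) = S σ b := by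
  ext u
  simp only [S, Set.mem_ofPred_eq, mul_assoc, tr_mul he, mul_eq_zero, he0, false_or]

open Polynomial in
lemma cards [Fintype F] {q : ℕ} (hq : 2 ≤ q) (hF : Fintype.card F = q ^ 3) (h2 : (2 : F) = 0)
    (h3 : ∀ x, σ (σ (σ x)) = x) (hσ : ∀ x, σ x = x ^ q) :
    {x : F | σ x = x}.ncard = q ∧ {x : F | tr σ x = 0}.ncard = q ^ 2 := by
  classical
  have hEle : {x : F | σ x = x}.ncard ≤ q := by
    have hne : (X ^ q - X : F[X]) ≠ 0 := FiniteField.X_pow_card_sub_X_ne_zero F (by omega)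
    have hsub : {x : F | σ x = x} ⊆ ((X ^ q - X : F[X]).roots.toFinset : Set F) := by
      intro x hx
      simp only [Set.mem_ofPred_eq, hσ] at hx
      simp [hne, hx, Polynomial.IsRoot]
    refine (Set.ncard_le_ncard hsub (Set.toFinite _)).trans ?_
    rw [Set.ncard_coe_finset]
    refine (Multiset.toFinset_card_le _).trans ((Polynomial.card_roots' _).trans ?_)
    rw [FiniteField.X_pow_card_sub_X_natDegree_eq F (by omega)]
  have hWle : {x : F | tr σ x = 0}.ncard ≤ q ^ 2 := by
    have hlt : q < q ^ 2 := by nlinarith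
    have hdeg : (X ^ (q ^ 2) + (X ^ q + X) : F[X]).natDegree = q ^ 2 := by
      have : (X ^ q + X : F[X]).natDegree ≤ q := by compute_degree; omega
      rw [Polynomial.natDegree_add_eq_left_of_natDegree_lt, Polynomial.natDegree_X_pow]
      rw [Polynomial.natDegree_X_pow]; omega
    have hne : (X ^ (q ^ 2) + (X ^ q + X) : F[X]) ≠ 0 := by
      intro h; rw [h, Polynomial.natDegree_zero] at hdeg; omega
    have hsub : {x : F | tr σ x = 0} ⊆ ((X ^ (q ^ 2) + (X ^ q + X) : F[X]).roots.toFinset : Set F) := by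
      intro x hx
      simp only [Set.mem_ofPred_eq, tr, hσ, ← pow_mul, ← sq] at hx
      simp only [Multiset.mem_toFinset, Finset.mem_coe, Polynomial.mem_roots hne, Polynomial.IsRoot,
        eval_add, eval_pow, eval_X]
      linear_combination hx
    refine (Set.ncard_le_ncard hsub (Set.toFinite _)).trans ?_
    rw [Set.ncard_coe_finset]
    refine (Multiset.toFinset_card_le _).trans ((Polynomial.card_roots' _).trans ?_)
    rw [hdeg]
  have hprod : q ^ 3 = {x : F | tr σ x = 0}.ncard * {x : F | σ x = x}.ncard := by
    let T : F →+ F := ⟨⟨tr σ, by simp [tr]⟩, tr_add⟩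
    have hk : {x : F | tr σ x = 0} = (T.ker : Set F) := by ext; simp [T, AddMonoidHom.mem_ker]
    have hr : {x : F | σ x = x} = (T.range : Set F) := by
      ext x
      constructor
      · intro hx; exact ⟨x, tr_E h2 hx⟩
      · rintro ⟨y, rfl⟩; exact tr_fix h3 y
    rw [hk, hr, ← Nat.card_coe_set_eq, ← Nat.card_coe_set_eq, ← hF, ← Nat.card_eq_fintype_card]
    have := T.ker.card_mul_index
    rw [AddSubgroup.index_ker] at this
    exact this.symm
  generalize {x : F | tr σ x = 0}.ncard = a at *
  generalize {x : F | σ x = x}.ncard = b at *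
  have hb : b = q := by
    refine le_antisymm hEle ?_
    have : q ^ 2 * q ≤ q ^ 2 * b := by
      calc q ^ 2 * q = a * b := by rw [← hprod]; ring
        _ ≤ q ^ 2 * b := Nat.mul_le_mul_right _ hWle
    exact Nat.le_of_mul_le_mul_left this (by positivity)
  subst hb
  refine ⟨rfl, ?_⟩
  apply Nat.eq_of_mul_eq_mul_right (show 0 < b by omega)
  rw [← hprod]; ring

end Conic

theorem statement2 (s : ℕ) (hs : 1 ≤ s) (F : Type*) [Field F] [Fintype F]
    (hF : Fintype.card F = 2 ^ (3 * s)) (ω : F)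
    (hω : ∀ x : F, x ≠ 0 → ∃ n : ℕ, x = ω ^ n) :
    (T1 s ω).ncard = 2 ^ s + 1 ∧
    (T2 s ω).ncard = 2 ^ (2 * s - 1) + 2 ^ (s - 1) ∧
    (T3 s ω).ncard = 2 ^ (2 * s - 1) - 2 ^ (s - 1) := by
  set q := 2 ^ s with hqdef
  have hq : 2 ≤ q := by
    calc 2 = 2 ^ 1 := rfl
      _ ≤ 2 ^ s := Nat.pow_le_pow_right (by norm_num) hs
  have hF' : Fintype.card F = q ^ 3 := by rw [hF, hqdef, ← pow_mul, mul_comm]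
  have hchar : CharP F 2 := by
    have : Fact (Nat.Prime 2) := ⟨Nat.prime_two⟩
    exact charP_of_card_eq_prime_pow (f := 3 * s) hF
  have h2 : (2 : F) = 0 := by exact_mod_cast CharP.cast_eq_zero F 2
  have : ExpChar F 2 := ExpChar.prime Nat.prime_two
  let σ : F →+* F := iterateFrobenius F 2 s
  have hσ : ∀ x, σ x = x ^ q := fun x => iterateFrobenius_def 2 s x
  have h3 : ∀ x, σ (σ (σ x)) = x := by
    intro x
    rw [hσ, hσ, hσ, ← pow_mul, ← pow_mul, ← sq, ← pow_succ', ← hF', FiniteField.pow_card]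
  have htr : ∀ x, trFE s x = Conic.tr σ x := by
    intro x
    simp only [trFE, Conic.tr, hσ, ← pow_mul, ← hqdef]
    rw [show 2 ^ (2 * s) = q * q by rw [hqdef, ← pow_add, two_mul]]
  have hQ : ∀ u, trFE s (u ^ (2 ^ s + 1)) = Conic.Q σ u := by
    intro u
    rw [htr, ← hqdef, pow_succ, ← hσ]
    simp only [Conic.tr, Conic.Q, map_mul, h3]
    ring
  have hSa : ∀ a : ℤ, Sa s ω a = Conic.S σ (ω ^ a) := by
    intro a
    ext u
    simp only [Sa, Conic.S, Set.mem_ofPred_eq, hQ, htr]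
  obtain ⟨hE, hW⟩ := Conic.cards (σ := σ) hq hF' h2 h3 hσ
  obtain ⟨hA1, hA2⟩ := Conic.count_A2 h2 h3 hq hE hW
  have hMq : Mof s = q ^ 2 + q + 1 := by rw [Mof, hqdef, ← pow_mul, mul_comm 2 s]
  have hM : Mof s * (q - 1) = q ^ 3 - 1 := by
    rw [hMq]
    obtain ⟨k, hk⟩ : ∃ k, q = k + 1 := ⟨q - 1, by omega⟩
    rw [hk, Nat.add_sub_cancel, eq_comm, Nat.sub_eq_iff_eq_add (Nat.one_le_pow _ _ (by omega))]
    ring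
  have : NeZero (Mof s) := ⟨by rw [hMq]; omega⟩
  have hT : ∀ n : ℕ, {b : F | b ≠ 0 ∧ (Conic.S σ b).ncard = n}.ncard =
      {x : ZMod (Mof s) | (Sa s ω (x.val : ℤ)).ncard = n}.ncard * (q - 1) := by
    intro n
    simp only [hSa]
    exact Conic.transfer hq hM hF' hσ hE hω (fun b => (Conic.S σ b).ncard = n)
      (fun e b he0 he h => by rw [Conic.S_smul he0 he]; exact h)
  have hq2 : q ^ 2 - 1 = (q + 1) * (q - 1) := by
    obtain ⟨k, hk⟩ : ∃ k, q = k + 1 := ⟨q - 1, by omega⟩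
    rw [hk, Nat.add_sub_cancel, Nat.sub_eq_iff_eq_add (Nat.one_le_pow _ _ (by omega))]
    ring
  have c1 : (T1 s ω).ncard = q + 1 := by
    have := hT (q - 1)
    rw [hA1, hq2] at this
    exact (Nat.eq_of_mul_eq_mul_right (by omega) this).symm
  have c2 : (T2 s ω).ncard * 2 = q * (q + 1) := by
    have := hT (2 * (q - 1))
    rw [this, hq2] at hA2
    change (T2 s ω).ncard * (q - 1) * 2 = _ at hA2
    apply Nat.eq_of_mul_eq_mul_right (show 0 < q - 1 by omega)
    linarith
  have cov : T1 s ω ∪ T2 s ω ∪ T3 s ω = Set.univ := by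
    ext x
    have hω0 : ω ≠ 0 := by
      rintro rfl
      have hall : ∀ y : F, y ≠ 0 → y = 1 := by
        intro y hy
        obtain ⟨n, hn⟩ := hω y hy
        rcases Nat.eq_zero_or_pos n with h | h
        · rw [hn, h, pow_zero]
        · exact absurd (by rw [hn, zero_pow (by omega)]) hy
      have h1 := Conic.ncard_ne_zero (F := F) (P := fun y => Conic.tr σ y = 0) (by simp [Conic.tr]) hW
      have hsub : {y : F | y ≠ 0 ∧ Conic.tr σ y = 0} ⊆ {1} := fun y hy => hall y hy.1
      have h4 := Set.ncard_le_ncard hsub (Set.toFinite _)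
      rw [h1, Set.ncard_singleton] at h4
      have : 2 * 2 ≤ q ^ 2 := by nlinarith
      omega
    have hb0 : ω ^ (x.val : ℤ) ≠ 0 := zpow_ne_zero _ hω0
    simp only [Set.mem_union, Set.mem_univ, iff_true, T1, T2, T3, Set.mem_ofPred_eq, hSa, ← hqdef]
    by_cases hc : Conic.tr σ (ω ^ (x.val : ℤ)) = 0
    · exact Or.inl (Or.inl (Conic.ncard_tang h2 h3 hE hb0 hc))
    · rcases Conic.ncard_sec h2 h3 hq hE hW hc with h | h
      · exact Or.inr h
      · exact Or.inl (Or.inr h)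
  have d12 : Disjoint (T1 s ω) (T2 s ω) := by
    rw [Set.disjoint_left]
    intro x hx hy
    simp only [T1, T2, Set.mem_ofPred_eq, ← hqdef] at hx hy
    omega
  have d3 : Disjoint (T1 s ω ∪ T2 s ω) (T3 s ω) := by
    rw [Set.disjoint_left]
    intro x hx hy
    simp only [T1, T2, T3, Set.mem_union, Set.mem_ofPred_eq, ← hqdef] at hx hy
    omega
  have csum : (T1 s ω).ncard + (T2 s ω).ncard + (T3 s ω).ncard = q ^ 2 + q + 1 := by
    rw [← Set.ncard_union_eq d12 (Set.toFinite _) (Set.toFinite _),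
      ← Set.ncard_union_eq d3 (Set.toFinite _) (Set.toFinite _), cov, Set.ncard_univ,
      Nat.card_zmod, hMq]
  have e1 : 2 ^ (s - 1) * 2 = q := by rw [← pow_succ, Nat.sub_add_cancel hs]
  have e2 : 2 ^ (2 * s - 1) * 2 = q * q := by
    rw [← pow_succ, Nat.sub_add_cancel (by omega), two_mul, pow_add]
  have c2' : (T2 s ω).ncard * 2 = q * q + q := by rw [c2]; ring
  rw [sq] at csum
  refine ⟨c1, ?_, ?_⟩
  · omega
  · omega
end
end

section
/- For every integer a: ψ(ω^a D) = −1 if a mod M ∈ T_1; ψ(ω^a D) = 2^s − 1 if a mod M ∈ T_2; and ψ(ω^a D) = −2^s − 1 if a mod M ∈ T_3. In particular the sums ψ(ω^a D), 0 ≤ a ≤ M−1, take exactly these three values. -/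
noncomputable section

open scoped BigOperators

section aux
open Finset

variable {F : Type*} [Field F]

lemma x_frob_add [Algebra (ZMod 2) F] (k : ℕ) (x y : F) :
    (x + y) ^ (2 ^ k) = x ^ (2 ^ k) + y ^ (2 ^ k) := by
  have : CharP F 2 := charP_of_injective_algebraMap (algebraMap (ZMod 2) F).injective 2
  exact add_pow_char_pow x y 2 k

lemma x_two [Algebra (ZMod 2) F] (x : F) : x + x = 0 := by
  have : CharP F 2 := charP_of_injective_algebraMap (algebraMap (ZMod 2) F).injective 2
  exact CharTwo.add_self_eq_zero x

lemma x_trFE_eq (s : ℕ) (x : F) :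
    trFE s x = x + x ^ (2 ^ s) + (x ^ (2 ^ s)) ^ (2 ^ s) := by
  unfold trFE
  rw [← pow_mul, ← pow_add, two_mul]

lemma x_cube [Fintype F] {s : ℕ} (hF : Fintype.card F = 2 ^ (3 * s)) (x : F) :
    ((x ^ (2 ^ s)) ^ (2 ^ s)) ^ (2 ^ s) = x := by
  rw [← pow_mul, ← pow_mul, ← pow_add, ← pow_add]
  have := FiniteField.pow_card x
  rw [hF] at this
  rwa [show s + (s + s) = 3 * s by ring]

lemma x_tr_add [Algebra (ZMod 2) F] (s : ℕ) (x y : F) :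
    trFE s (x + y) = trFE s x + trFE s y := by
  unfold trFE
  rw [x_frob_add, x_frob_add]; ring

lemma x_tr_smul (s : ℕ) {l : F} (hl : l ^ (2 ^ s) = l) (x : F) :
    trFE s (l * x) = l * trFE s x := by
  rw [x_trFE_eq, x_trFE_eq]
  simp only [mul_pow, hl]; ring

lemma x_tr_mem [Fintype F] [Algebra (ZMod 2) F] {s : ℕ} (hF : Fintype.card F = 2 ^ (3 * s))
    (x : F) : (trFE s x) ^ (2 ^ s) = trFE s x := by
  rw [x_trFE_eq, x_frob_add, x_frob_add, x_cube hF]; ring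

lemma x_finrank [Fintype F] [Algebra (ZMod 2) F] {s : ℕ} (hF : Fintype.card F = 2 ^ (3 * s)) :
    Module.finrank (ZMod 2) F = 3 * s := by
  have h := Module.card_eq_pow_finrank (K := ZMod 2) (V := F)
  rw [hF, ZMod.card] at h
  exact (Nat.pow_right_injective (le_refl 2) h).symm

lemma x_abs_zero [Fintype F] [Algebra (ZMod 2) F] {s : ℕ} (hF : Fintype.card F = 2 ^ (3 * s))
    {x : F} (hx : trFE s x = 0) : Algebra.trace (ZMod 2) F x = 0 := by
  apply (algebraMap (ZMod 2) F).injective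
  rw [FiniteField.algebraMap_trace_eq_sum_pow, x_finrank hF, map_zero, Nat.card_zmod,
    show 3 * s = s + s + s by ring, sum_range_add, sum_range_add, ← sum_add_distrib,
    ← sum_add_distrib]
  apply sum_eq_zero
  intro i _
  have : (trFE s x) ^ (2 ^ i) = 0 := by rw [hx]; exact zero_pow (by positivity)
  rw [x_trFE_eq, x_frob_add, x_frob_add] at this
  rw [← this, ← pow_mul, ← pow_mul, ← pow_mul, ← pow_add, ← pow_add, add_assoc s s i]

lemma x_exists_abs [Fintype F] [Algebra (ZMod 2) F] :
    ∃ z : F, Algebra.trace (ZMod 2) F z ≠ 0 := by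
  by_contra! h
  exact Algebra.trace_ne_zero (ZMod 2) F (LinearMap.ext h)

lemma x_psi_add [Algebra (ZMod 2) F] (x y : F) : psi F (x + y) = psi F x * psi F y := by
  unfold psi
  rw [map_add]
  generalize Algebra.trace (ZMod 2) F x = a
  generalize Algebra.trace (ZMod 2) F y = b
  revert a b
  decide

open Classical in
def xE (F : Type*) [Field F] [Fintype F] (s : ℕ) : Finset F :=
  univ.filter fun x => x ≠ 0 ∧ x ^ (2 ^ s) = x

open Classical in
def xK (F : Type*) [Field F] [Fintype F] (s : ℕ) : Finset F :=
  univ.filter fun x => x ≠ 0 ∧ trFE s x = 0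

open Classical in
def xV {F : Type*} [Field F] [Fintype F] (s : ℕ) (c : F) : Finset F :=
  univ.filter fun x => x ≠ 0 ∧ trFE s x = 0 ∧ trFE s (c * x⁻¹) = 0

lemma x_mem_E [Fintype F] {s : ℕ} {x : F} : x ∈ xE F s ↔ x ≠ 0 ∧ x ^ (2 ^ s) = x := by
  simp [xE]
lemma x_mem_K [Fintype F] {s : ℕ} {x : F} : x ∈ xK F s ↔ x ≠ 0 ∧ trFE s x = 0 := by
  simp [xK]
lemma x_mem_V [Fintype F] {s : ℕ} {c x : F} :
    x ∈ xV s c ↔ x ≠ 0 ∧ trFE s x = 0 ∧ trFE s (c * x⁻¹) = 0 := by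
  simp [xV]

lemma x_card_E [Fintype F] {s : ℕ} (hs : 1 ≤ s) (hF : Fintype.card F = 2 ^ (3 * s)) :
    (xE F s).card = 2 ^ s - 1 := by
  classical
  have hq : 2 ≤ 2 ^ s := by simpa using Nat.pow_le_pow_right (n := 2) (by norm_num) hs
  obtain ⟨m, hm⟩ : ∃ m, 2 ^ s = m + 1 := ⟨2 ^ s - 1, by omega⟩
  have h1 : Nat.card (powMonoidHom (α := Fˣ) m).ker = m := by
    have hc : Nat.card Fˣ = m * ((m+1)^2 + (m+1) + 1) := by
      rw [Nat.card_eq_fintype_card, Fintype.card_units, hF, mul_comm 3 s, pow_mul, hm]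
      have : (m+1)^3 = m * ((m+1)^2 + (m+1) + 1) + 1 := by ring
      omega
    have h2 := IsCyclic.card_powMonoidHom_range Fˣ m
    have h3 := (powMonoidHom (α := Fˣ) m).ker.card_mul_index
    rw [Subgroup.index_ker, h2, hc, Nat.gcd_eq_right (Dvd.intro _ rfl),
      Nat.mul_div_cancel_left _ (by omega)] at h3
    exact Nat.eq_of_mul_eq_mul_right (by positivity) h3
  have h4 : (xE F s).card = Nat.card (powMonoidHom (α := Fˣ) m).ker := by
    have h5 : ((xE F s : Finset F) : Set F)
        = Units.val '' ((powMonoidHom (α := Fˣ) m).ker : Set Fˣ) := by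
      ext x
      simp only [x_mem_E, Set.mem_image, SetLike.mem_coe, MonoidHom.mem_ker,
        powMonoidHom_apply, hm]
      constructor
      · rintro ⟨h, h'⟩
        refine ⟨Units.mk0 x h, ?_, rfl⟩
        ext
        rw [pow_succ] at h'
        simpa using mul_right_cancel₀ h (h'.trans (one_mul x).symm)
      · rintro ⟨u, hu, rfl⟩
        refine ⟨u.ne_zero, ?_⟩
        rw [pow_succ, ← Units.val_pow_eq_pow_val, hu]
        simp
    rw [← Set.ncard_coe_finset, h5, Set.ncard_image_of_injective _ Units.val_injective]
    rfl
  rw [h4, h1, hm]; rfl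

lemma x_card_ker [Fintype F] [Algebra (ZMod 2) F] {s : ℕ} (hs : 1 ≤ s)
    (hF : Fintype.card F = 2 ^ (3 * s)) :
    (xK F s).card = 2 ^ (2 * s) - 1 := by
  classical
  let f : F →+ F := AddMonoidHom.mk' (trFE s) (x_tr_add s)
  have hr : Nat.card f.range = 2 ^ s := by
    have : (f.range : Set F) = ((insert 0 (xE F s) : Finset F) : Set F) := by
      ext y
      simp only [AddMonoidHom.coe_range, Set.mem_range, coe_insert, Set.mem_insert_iff, mem_coe,
        x_mem_E]
      constructor
      · rintro ⟨x, rfl⟩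
        by_cases h : f x = 0
        · exact Or.inl h
        · exact Or.inr ⟨h, x_tr_mem hF x⟩
      · intro h
        have hy : y ^ (2 ^ s) = y := by
          rcases h with rfl | h
          · exact zero_pow (by positivity)
          · exact h.2
        obtain ⟨z, hz⟩ := x_exists_abs (F := F)
        have hz0 : trFE s z ≠ 0 := fun h => hz (x_abs_zero hF h)
        refine ⟨(y / trFE s z) * z, ?_⟩
        change trFE s _ = _
        rw [x_tr_smul s (by rw [div_pow, hy, x_tr_mem hF])]
        field_simp
    have h2 : Nat.card f.range = (insert 0 (xE F s)).card := by
      rw [← Set.ncard_coe_finset, ← this]; rfl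
    rw [h2, card_insert_of_notMem (by simp [x_mem_E]), x_card_E hs hF]
    have : 1 ≤ 2 ^ s := Nat.one_le_two_pow
    omega
  have h3 := f.ker.card_mul_index
  rw [AddSubgroup.index_ker, hr, Nat.card_eq_fintype_card (α := F), hF] at h3
  have h5 : Nat.card f.ker = 2 ^ (2 * s) := by
    apply Nat.eq_of_mul_eq_mul_right (m := 2 ^ s) (by positivity)
    rw [h3, ← pow_add]; congr 1; ring_nf
  have h6 : Nat.card f.ker = (insert 0 (xK F s)).card := by
    have : (f.ker : Set F) = ((insert 0 (xK F s) : Finset F) : Set F) := by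
      ext y
      simp only [SetLike.mem_coe, AddMonoidHom.mem_ker, coe_insert, Set.mem_insert_iff,
        x_mem_K]
      by_cases h : y = 0
      · simp [h]
      · simp only [h, ne_eq, not_false_eq_true, true_and, false_or]; rfl
    rw [← Set.ncard_coe_finset, ← this]; rfl
  rw [h6, card_insert_of_notMem (by simp [x_mem_K])] at h5
  omega

open Classical in
/-- orthogonality -/
lemma x_sum_psi [Fintype F] [Algebra (ZMod 2) F] {s : ℕ} (hs : 1 ≤ s)
    (hF : Fintype.card F = 2 ^ (3 * s)) (x : F) :
    ∑ l ∈ xE F s, psi F (l * x) = (if trFE s x = 0 then (2 : ℤ) ^ s else 0) - 1 := by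
  split_ifs with h
  · have : ∀ l ∈ xE F s, psi F (l * x) = 1 := by
      intro l hl
      rw [x_mem_E] at hl
      unfold psi
      rw [if_pos]
      apply x_abs_zero hF
      rw [x_tr_smul s hl.2, h, mul_zero]
    rw [sum_congr rfl this, sum_const, x_card_E hs hF, nsmul_eq_mul, mul_one,
      Nat.cast_sub Nat.one_le_two_pow]
    simp
  · obtain ⟨z, hz⟩ := x_exists_abs (F := F)
    have hz0 : trFE s z ≠ 0 := fun h => hz (x_abs_zero hF h)
    set m := trFE s z / trFE s x with hm
    have hmE : m ^ (2 ^ s) = m := by rw [hm, div_pow, x_tr_mem hF, x_tr_mem hF]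
    have hm1 : psi F (m * x) = -1 := by
      unfold psi
      rw [if_neg]
      intro h0
      apply hz
      have : trFE s (z + m * x) = 0 := by
        rw [x_tr_add, x_tr_smul s hmE, hm, div_mul_cancel₀ _ h]; exact x_two _
      have := x_abs_zero hF this
      rwa [map_add, h0, add_zero] at this
    have key : ∑ l ∈ insert 0 (xE F s), psi F (l * x) = 0 := by
      have hmem : ∀ l : F, l ∈ insert 0 (xE F s) ↔ l ^ (2 ^ s) = l := by
        intro l
        rw [mem_insert, x_mem_E]
        by_cases h : l = 0
        · simp [h]
        · simp [h]
      have : ∑ l ∈ insert 0 (xE F s), psi F (l * x)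
          = ∑ l ∈ insert 0 (xE F s), psi F ((l + m) * x) := by
        apply sum_bij' (fun l _ => l + m) (fun l _ => l + m)
        · intro l hl; rw [hmem] at *; rw [x_frob_add, hl, hmE]
        · intro l hl; rw [hmem] at *; rw [x_frob_add, hl, hmE]
        · intro l _; rw [add_assoc, x_two, add_zero]
        · intro l _; rw [add_assoc, x_two, add_zero]
        · intro l _; rw [add_assoc, x_two, add_zero]
      simp only [add_mul, x_psi_add, hm1, mul_neg, mul_one, sum_neg_distrib] at this
      linarith
    rw [sum_insert (by simp [x_mem_E])] at key
    have h0 : psi F ((0 : F) * x) = 1 := by simp [psi]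
    rw [h0] at key
    linarith

lemma x_psiSum_eq [Fintype F] [Algebra (ZMod 2) F] (s : ℕ) (c : F) :
    psiSum F c (Dset F s) = ∑ v ∈ xK F s, psi F (c * v⁻¹) := by
  classical
  unfold psiSum
  have : Dset F s = (((xK F s).image (fun v => v⁻¹) : Finset F) : Set F) := by
    ext u
    simp only [Dset, Set.mem_ofPred_eq, coe_image, Set.mem_image, mem_coe, x_mem_K]
    constructor
    · rintro ⟨h, h'⟩
      exact ⟨u⁻¹, ⟨inv_ne_zero h, h'⟩, inv_inv u⟩
    · rintro ⟨v, ⟨h, h'⟩, rfl⟩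
      exact ⟨inv_ne_zero h, by rwa [inv_inv]⟩
  rw [this, finsum_mem_coe_finset, sum_image (fun a _ b _ h => inv_injective h)]

lemma x_psiSum [Fintype F] [Algebra (ZMod 2) F] {s : ℕ} (hs : 1 ≤ s)
    (hF : Fintype.card F = 2 ^ (3 * s)) (c : F) :
    ((2 : ℤ) ^ s - 1) * psiSum F c (Dset F s)
      = 2 ^ s * (xV s c).card - (2 ^ (2 * s) - 1) := by
  classical
  rw [x_psiSum_eq]
  have h1 : ∀ l ∈ xE F s, ∑ v ∈ xK F s, psi F (c * v⁻¹)
      = ∑ v ∈ xK F s, psi F (l * (c * v⁻¹)) := by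
    intro l hl
    rw [x_mem_E] at hl
    have hli : (l⁻¹) ^ (2 ^ s) = l⁻¹ := by rw [inv_pow, hl.2]
    apply sum_bij' (fun v _ => l * v) (fun v _ => l⁻¹ * v)
    · intro v hv; rw [x_mem_K] at *
      exact ⟨mul_ne_zero hl.1 hv.1, by rw [x_tr_smul s hl.2, hv.2, mul_zero]⟩
    · intro v hv; rw [x_mem_K] at *
      exact ⟨mul_ne_zero (inv_ne_zero hl.1) hv.1, by rw [x_tr_smul s hli, hv.2, mul_zero]⟩
    · intro v _; rw [inv_mul_cancel_left₀ hl.1]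
    · intro v _; rw [mul_inv_cancel_left₀ hl.1]
    · intro v _
      congr 1
      rw [mul_inv]
      field_simp [hl.1]
  have h2 : ((2 : ℤ) ^ s - 1) * ∑ v ∈ xK F s, psi F (c * v⁻¹)
      = ∑ l ∈ xE F s, ∑ v ∈ xK F s, psi F (l * (c * v⁻¹)) := by
    rw [← sum_congr rfl h1, sum_const, x_card_E hs hF, nsmul_eq_mul,
      Nat.cast_sub Nat.one_le_two_pow]
    simp
  rw [h2, sum_comm, sum_congr rfl (fun v _ => x_sum_psi hs hF _), sum_sub_distrib, ← sum_filter,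
    sum_const, sum_const, x_card_ker hs hF]
  have : (xK F s).filter (fun v => trFE s (c * v⁻¹) = 0) = xV s c := by
    ext v; simp only [mem_filter, x_mem_K, x_mem_V, and_assoc]
  rw [this, nsmul_eq_mul, nsmul_eq_mul, Nat.cast_sub Nat.one_le_two_pow]
  push_cast
  ring


lemma x_quad [Fintype F] [Algebra (ZMod 2) F] {s : ℕ} {c v : F} (hv : v ∈ xV s c) :
    c * (v ^ 2 ^ s) ^ 2 + trFE s c * v * v ^ 2 ^ s + c ^ 2 ^ s * v ^ 2 = 0 := by
  obtain ⟨h0, h1, h2⟩ := x_mem_V.1 hv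
  rw [x_trFE_eq] at h1 h2 ⊢
  rw [mul_pow, mul_pow, inv_pow, inv_pow] at h2
  have hw : v ^ 2 ^ s ≠ 0 := pow_ne_zero _ h0
  have hw2 : (v ^ 2 ^ s) ^ 2 ^ s ≠ 0 := pow_ne_zero _ hw
  generalize v ^ 2 ^ s = w at *
  generalize c ^ 2 ^ s = c1 at *
  generalize c1 ^ 2 ^ s = c2 at *
  have e : w ^ 2 ^ s = v + w := by linear_combination h1 - x_two (v + w)
  rw [e] at h2 hw2
  field_simp at h2
  linear_combination h2

lemma x_V_cases [Fintype F] [Algebra (ZMod 2) F] {s : ℕ} {c v v' : F} (hc : c ≠ 0)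
    (hv : v ∈ xV s c) (hv' : v' ∈ xV s c) : v' / v ∈ xE F s ∨ v' * v / c ∈ xE F s := by
  have q := x_quad hv
  have q' := x_quad hv'
  have h0 := (x_mem_V.1 hv).1
  have h0' := (x_mem_V.1 hv').1
  have hw : v ^ 2 ^ s ≠ 0 := pow_ne_zero _ h0
  have hw' : v' ^ 2 ^ s ≠ 0 := pow_ne_zero _ h0'
  have hc' : c ^ 2 ^ s ≠ 0 := pow_ne_zero _ hc
  rw [x_mem_E, x_mem_E]
  have h2 : (2 : F) = 0 := by rw [← one_add_one_eq_two]; exact x_two 1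
  rw [div_pow, div_pow, mul_pow]
  generalize v ^ 2 ^ s = w at *
  generalize v' ^ 2 ^ s = w' at *
  generalize c ^ 2 ^ s = c1 at *
  generalize trFE s c = T at *
  have key : (w' * v + w * v') * (c * (w' * v + w * v') + T * v * v') = 0 := by
    linear_combination v ^ 2 * q' + v' ^ 2 * q
      + (c * w' * v * w * v' - c1 * v ^ 2 * v' ^ 2) * h2
  rcases mul_eq_zero.1 key with k | k
  · left
    refine ⟨div_ne_zero h0' h0, ?_⟩
    rw [div_eq_div_iff hw h0]
    linear_combination k - w * v' * h2
  · right
    refine ⟨div_ne_zero (mul_ne_zero h0' h0) hc, ?_⟩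
    rw [div_eq_div_iff hc' hc]
    apply mul_left_cancel₀ h0
    linear_combination w * k - v' * q

lemma x_V_smul [Fintype F] {s : ℕ} {c v l : F} (hv : v ∈ xV s c) (hl : l ∈ xE F s) :
    l * v ∈ xV s c := by
  rw [x_mem_V] at *
  rw [x_mem_E] at hl
  have hli : (l⁻¹) ^ (2 ^ s) = l⁻¹ := by rw [inv_pow, hl.2]
  refine ⟨mul_ne_zero hl.1 hv.1, by rw [x_tr_smul s hl.2, hv.2.1, mul_zero], ?_⟩
  rw [show c * (l * v)⁻¹ = l⁻¹ * (c * v⁻¹) by rw [mul_inv]; ring, x_tr_smul s hli, hv.2.2,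
    mul_zero]

lemma x_V_inv [Fintype F] {s : ℕ} {c v : F} (hc : c ≠ 0) (hv : v ∈ xV s c) :
    c * v⁻¹ ∈ xV s c := by
  rw [x_mem_V] at *
  refine ⟨mul_ne_zero hc (inv_ne_zero hv.1), hv.2.2, ?_⟩
  rw [mul_inv, inv_inv, mul_inv_cancel_left₀ hc]; exact hv.2.1

lemma x_E_inv [Fintype F] {s : ℕ} {l : F} (hl : l ∈ xE F s) : l⁻¹ ∈ xE F s := by
  rw [x_mem_E] at *
  exact ⟨inv_ne_zero hl.1, by rw [inv_pow, hl.2]⟩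

lemma x_E_mul [Fintype F] {s : ℕ} {l m : F} (hl : l ∈ xE F s) (hm : m ∈ xE F s) :
    l * m ∈ xE F s := by
  rw [x_mem_E] at *
  exact ⟨mul_ne_zero hl.1 hm.1, by rw [mul_pow, hl.2, hm.2]⟩

open Classical in
def xO [Fintype F] (s : ℕ) (v : F) : Finset F := (xE F s).image (fun l => l * v)

lemma x_card_O [Fintype F] {s : ℕ} (hs : 1 ≤ s) (hF : Fintype.card F = 2 ^ (3 * s))
    {v : F} (hv : v ≠ 0) : (xO s v).card = 2 ^ s - 1 := by
  classical
  unfold xO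
  rw [card_image_of_injective _ (mul_left_injective₀ hv), x_card_E hs hF]

lemma x_mem_O [Fintype F] {s : ℕ} {v x : F} (hv : v ≠ 0) : x ∈ xO s v ↔ x / v ∈ xE F s := by
  classical
  unfold xO
  rw [mem_image]
  constructor
  · rintro ⟨l, hl, rfl⟩; rwa [mul_div_cancel_right₀ _ hv]
  · intro h; exact ⟨_, h, div_mul_cancel₀ _ hv⟩

open Classical in
lemma x_V_eq [Fintype F] [Algebra (ZMod 2) F] {s : ℕ} {c v : F} (hc : c ≠ 0)
    (hv : v ∈ xV s c) : xV s c = xO s v ∪ xO s (c * v⁻¹) := by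
  have h0 := (x_mem_V.1 hv).1
  have h1 := (x_mem_V.1 (x_V_inv hc hv)).1
  ext x
  rw [mem_union, x_mem_O h0, x_mem_O h1]
  constructor
  · intro hx
    rcases x_V_cases hc hv hx with h | h
    · exact Or.inl h
    · right; convert h using 1; field_simp
  · rintro (h | h)
    · have := x_V_smul hv h
      rwa [div_mul_cancel₀ _ h0] at this
    · have := x_V_smul (x_V_inv hc hv) h
      rwa [div_mul_cancel₀ _ h1] at this

lemma x_tr_sq [Algebra (ZMod 2) F] (s : ℕ) (x : F) : trFE s (x ^ 2) = (trFE s x) ^ 2 := by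
  have h := fun x y : F => x_frob_add (F := F) 1 x y
  simp only [pow_one] at h
  unfold trFE
  rw [h, h, ← pow_mul, ← pow_mul, ← pow_mul, ← pow_mul, mul_comm 2, mul_comm 2]

lemma x_sqrt [Fintype F] {s : ℕ} (hs : 1 ≤ s) {l : F} (hl : l ∈ xE F s) :
    ∃ m ∈ xE F s, m ^ 2 = l := by
  rw [x_mem_E] at hl
  refine ⟨l ^ 2 ^ (s - 1), x_mem_E.2 ⟨pow_ne_zero _ hl.1, ?_⟩, ?_⟩
  · rw [← pow_mul, mul_comm, pow_mul, hl.2]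
  · rw [← pow_mul, ← pow_succ, Nat.sub_add_cancel hs, hl.2]

/-- the trichotomy -/
lemma x_tri [Fintype F] [Algebra (ZMod 2) F] {s : ℕ} (hs : 1 ≤ s)
    (hF : Fintype.card F = 2 ^ (3 * s)) {c : F} (hc : c ≠ 0) :
    (xV s c).card = 0 ∨ ((xV s c).card = 2 ^ s - 1 ∧ c ∈ xK F s) ∨
      (xV s c).card = 2 * (2 ^ s - 1) := by
  classical
  rcases (xV s c).eq_empty_or_nonempty with h | ⟨v, hv⟩
  · left; rw [h, card_empty]
  right
  have h0 := (x_mem_V.1 hv).1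
  have ht := (x_mem_V.1 hv).2.1
  have h1 := (x_mem_V.1 (x_V_inv hc hv)).1
  have hO := x_V_eq hc hv
  by_cases hd : Disjoint (xO s v) (xO s (c * v⁻¹))
  · right
    rw [hO, card_union_of_disjoint hd, x_card_O hs hF h0, x_card_O hs hF h1]; ring
  · left
    rw [not_disjoint_iff] at hd
    obtain ⟨x, hx, hx'⟩ := hd
    rw [x_mem_O h0] at hx
    rw [x_mem_O h1] at hx'
    have hx0 : x ≠ 0 := by
      rintro rfl
      rw [zero_div, x_mem_E] at hx
      exact hx.1 rfl
    have hl : c / v ^ 2 ∈ xE F s := by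
      have := x_E_mul hx (x_E_inv hx')
      convert this using 1
      field_simp
    have heq : xO s (c * v⁻¹) = xO s v := by
      ext y
      rw [x_mem_O h0, x_mem_O h1]
      constructor
      · intro h
        convert x_E_mul h hl using 1
        field_simp
      · intro h
        convert x_E_mul h (x_E_inv hl) using 1
        field_simp
    refine ⟨by rw [hO, heq, union_self, x_card_O hs hF h0], ?_⟩
    obtain ⟨m, hm, hml⟩ := x_sqrt hs hl
    rw [x_mem_K]
    refine ⟨hc, ?_⟩
    have : c = (m * v) ^ 2 := by rw [mul_pow, hml]; field_simp
    rw [this, x_tr_sq, x_tr_smul s (x_mem_E.1 hm).2, ht]; simp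

lemma x_card_one [Fintype F] [Algebra (ZMod 2) F] {s : ℕ} (hs : 1 ≤ s)
    (hF : Fintype.card F = 2 ^ (3 * s)) : ∃ c : F, c ≠ 0 ∧ (xV s c).card = 2 ^ s - 1 := by
  classical
  have hpos : 0 < (xK F s).card := by
    rw [x_card_ker hs hF]
    have : 2 ≤ 2 ^ (2 * s) := by
      simpa using Nat.pow_le_pow_right (n := 2) (by norm_num) (show 1 ≤ 2 * s by omega)
    omega
  obtain ⟨v, hv⟩ := card_pos.1 hpos
  rw [x_mem_K] at hv
  have hc : v ^ 2 ≠ 0 := pow_ne_zero _ hv.1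
  have e : v ^ 2 * v⁻¹ = v := by have := hv.1; field_simp
  refine ⟨v ^ 2, hc, ?_⟩
  have hV : v ∈ xV s (v ^ 2) := by
    rw [x_mem_V, e]; exact ⟨hv.1, hv.2, hv.2⟩
  rw [x_V_eq hc hV, e, union_self, x_card_O hs hF hv.1]

open Classical in
lemma x_total [Fintype F] [Algebra (ZMod 2) F] {s : ℕ} (hs : 1 ≤ s)
    (hF : Fintype.card F = 2 ^ (3 * s)) :
    ∑ c : F with c ≠ 0, (xV s c).card = (2 ^ (2 * s) - 1) * (2 ^ (2 * s) - 1) := by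
  have h1 : ∀ c : F, (xV s c).card = ∑ v ∈ xK F s, if trFE s (c * v⁻¹) = 0 then 1 else 0 := by
    intro c
    rw [← card_filter]
    congr 1
    ext v; simp only [mem_filter, x_mem_K, x_mem_V, and_assoc]
  simp only [h1]
  rw [sum_comm]
  have h2 : ∀ v ∈ xK F s, (∑ c : F with c ≠ 0, if trFE s (c * v⁻¹) = 0 then 1 else 0)
      = 2 ^ (2 * s) - 1 := by
    intro v hv
    have h0 := (x_mem_K.1 hv).1
    rw [← card_filter, ← x_card_ker hs hF]
    apply card_bij' (fun c _ => c * v⁻¹) (fun x _ => x * v)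
    · intro c hc
      simp only [mem_filter, mem_univ, true_and] at hc
      exact x_mem_K.2 ⟨mul_ne_zero hc.1 (inv_ne_zero h0), hc.2⟩
    · intro x hx
      rw [x_mem_K] at hx
      simp only [mem_filter, mem_univ, true_and]
      exact ⟨mul_ne_zero hx.1 h0, by rw [mul_inv_cancel_right₀ h0]; exact hx.2⟩
    · intro c _; exact inv_mul_cancel_right₀ h0 c
    · intro x _; exact mul_inv_cancel_right₀ h0 x
  rw [sum_congr rfl h2, sum_const, x_card_ker hs hF, smul_eq_mul]

open Classical in
lemma x_card_nz [Fintype F] {s : ℕ} (hF : Fintype.card F = 2 ^ (3 * s)) :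
    (univ.filter (fun c : F => c ≠ 0)).card = 2 ^ (3 * s) - 1 := by
  rw [filter_ne' univ (0 : F), card_erase_of_mem (mem_univ _), card_univ, hF]

lemma x_card_two [Fintype F] [Algebra (ZMod 2) F] {s : ℕ} (hs : 1 ≤ s)
    (hF : Fintype.card F = 2 ^ (3 * s)) :
    ∃ c : F, c ≠ 0 ∧ (xV s c).card = 2 * (2 ^ s - 1) := by
  classical
  by_contra! hcon
  have hle : ∑ c : F with c ≠ 0, (xV s c).card ≤ ∑ c ∈ xK F s, (2 ^ s - 1) := by
    have hsub : xK F s ⊆ univ.filter (fun c : F => c ≠ 0) := by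
      intro c hc; simpa using (x_mem_K.1 hc).1
    rw [← sum_subset hsub]
    · apply sum_le_sum
      intro c hc
      have h0 := (x_mem_K.1 hc).1
      rcases x_tri hs hF h0 with h | h | h
      · omega
      · omega
      · exact absurd h (hcon c h0)
    · intro c hc hn
      have h0 : c ≠ 0 := by simpa using hc
      rcases x_tri hs hF h0 with h | h | h
      · exact h
      · exact absurd h.2 hn
      · exact absurd h (hcon c h0)
  rw [x_total hs hF, sum_const, x_card_ker hs hF, smul_eq_mul] at hle
  have hq : 2 ≤ 2 ^ s := by simpa using Nat.pow_le_pow_right (n := 2) (by norm_num) hs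
  obtain ⟨m, hm⟩ : ∃ m, 2 ^ s = m + 2 := ⟨2 ^ s - 2, by omega⟩
  have e2 : 2 ^ (2 * s) = (m + 2) * (m + 2) := by rw [two_mul, pow_add, hm]
  rw [e2, hm] at hle
  have e3 : (m + 2) * (m + 2) - 1 = (m + 3) * (m + 1) := by
    have : (m + 2) * (m + 2) = (m + 3) * (m + 1) + 1 := by ring
    omega
  rw [e3] at hle
  have := Nat.le_of_mul_le_mul_left hle (by positivity)
  have e4 : m + 2 - 1 = m + 1 := rfl
  rw [e4] at this
  nlinarith

lemma x_card_zero [Fintype F] [Algebra (ZMod 2) F] {s : ℕ} (hs : 1 ≤ s)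
    (hF : Fintype.card F = 2 ^ (3 * s)) :
    ∃ c : F, c ≠ 0 ∧ (xV s c).card = 0 := by
  classical
  by_contra! hcon
  have hle : ∑ c : F with c ≠ 0, 2 * (2 ^ s - 1) ≤
      ∑ c : F with c ≠ 0, (xV s c).card + ∑ c ∈ xK F s, (2 ^ s - 1) := by
    have hsub : xK F s ⊆ univ.filter (fun c : F => c ≠ 0) := by
      intro c hc; simpa using (x_mem_K.1 hc).1
    have : ∑ c ∈ xK F s, (2 ^ s - 1)
        = ∑ c : F with c ≠ 0, if c ∈ xK F s then (2 ^ s - 1) else 0 := by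
      rw [← sum_filter]
      congr 1
      ext c
      simp only [mem_filter, mem_univ, true_and]
      exact ⟨fun h => ⟨(x_mem_K.1 h).1, h⟩, fun h => h.2⟩
    rw [this, ← sum_add_distrib]
    apply sum_le_sum
    intro c hc
    have h0 : c ≠ 0 := by simpa using hc
    rcases x_tri hs hF h0 with h | h | h
    · exact absurd h (hcon c h0)
    · rw [if_pos h.2]; omega
    · omega
  rw [x_total hs hF, sum_const, sum_const, x_card_ker hs hF, x_card_nz hF, smul_eq_mul,
    smul_eq_mul] at hle
  have hq : 2 ≤ 2 ^ s := by simpa using Nat.pow_le_pow_right (n := 2) (by norm_num) hs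
  obtain ⟨m, hm⟩ : ∃ m, 2 ^ s = m + 2 := ⟨2 ^ s - 2, by omega⟩
  have e2 : 2 ^ (2 * s) = (m + 2) * (m + 2) := by rw [two_mul, pow_add, hm]
  have e2' : 2 ^ (3 * s) = (m + 2) ^ 3 := by rw [mul_comm, pow_mul, hm]
  rw [e2, e2', hm] at hle
  have e3 : (m + 2) * (m + 2) - 1 = (m + 3) * (m + 1) := by
    have : (m + 2) * (m + 2) = (m + 3) * (m + 1) + 1 := by ring
    omega
  have e5 : (m + 2) ^ 3 - 1 = (m + 1) * (m ^ 2 + 5 * m + 7) := by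
    have : (m + 2) ^ 3 = (m + 1) * (m ^ 2 + 5 * m + 7) + 1 := by ring
    omega
  have e4 : m + 2 - 1 = m + 1 := rfl
  rw [e3, e4, e5] at hle
  nlinarith [mul_nonneg m.zero_le m.zero_le]


lemma x_Sa [Fintype F] [Algebra (ZMod 2) F] {s : ℕ} (hF : Fintype.card F = 2 ^ (3 * s))
    (ω : F) (a : ℤ) : (Sa s ω a).ncard = (xV s (ω ^ a)).card := by
  rw [← Set.ncard_coe_finset, ← Set.ncard_image_of_injective (Sa s ω a) (inv_injective (G := F))]
  congr 1
  have key : ∀ u : F, u ≠ 0 → (trFE s (u ^ (2 ^ s + 1)) = 0 ↔ trFE s u⁻¹ = 0) := by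
    intro u hu
    have hc := x_cube hF u
    rw [x_trFE_eq, x_trFE_eq, pow_succ, mul_pow, mul_pow, hc, inv_pow, inv_pow]
    have hw : u ^ 2 ^ s ≠ 0 := pow_ne_zero _ hu
    have hx : (u ^ 2 ^ s) ^ 2 ^ s ≠ 0 := pow_ne_zero _ hw
    generalize (u ^ 2 ^ s) ^ 2 ^ s = x at *
    generalize u ^ 2 ^ s = w at *
    have : u⁻¹ + w⁻¹ + x⁻¹ = (w * u + x * w + u * x) / (u * w * x) := by
      field_simp; ring
    rw [this, div_eq_zero_iff]
    constructor
    · exact Or.inl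
    · rintro (h | h)
      · exact h
      · exact absurd h (mul_ne_zero (mul_ne_zero hu hw) hx)
  ext v
  rw [Set.mem_image, mem_coe, x_mem_V]
  constructor
  · rintro ⟨u, ⟨h0, h1, h2⟩, rfl⟩
    exact ⟨inv_ne_zero h0, (key u h0).1 h1, by rwa [inv_inv]⟩
  · rintro ⟨h0, h1, h2⟩
    exact ⟨v⁻¹, ⟨inv_ne_zero h0, (key _ (inv_ne_zero h0)).2 (by rwa [inv_inv]), h2⟩, inv_inv v⟩

lemma x_V_period [Fintype F] {s : ℕ} {c l : F} (hl : l ∈ xE F s) : xV s (l * c) = xV s c := by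
  rw [x_mem_E] at hl
  ext v
  rw [x_mem_V, x_mem_V, mul_assoc, x_tr_smul s hl.2, mul_eq_zero, or_iff_right hl.1]

lemma x_omega [Fintype F] {s : ℕ} (hs : 1 ≤ s) (hF : Fintype.card F = 2 ^ (3 * s)) {ω : F}
    (hω : ∀ x : F, x ≠ 0 → ∃ n : ℕ, x = ω ^ n) : ω ≠ 0 := by
  classical
  rintro rfl
  have hsub : (univ : Finset F) ⊆ {0, 1} := by
    intro x _
    by_cases hx : x = 0
    · simp [hx]
    · obtain ⟨n, hn⟩ := hω x hx
      rcases Nat.eq_zero_or_pos n with h | h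
      · simp [hn, h]
      · rw [zero_pow h.ne'] at hn; exact absurd hn hx
  have h1 := card_le_card hsub
  rw [card_univ, hF] at h1
  have h2 : ({0, 1} : Finset F).card ≤ 2 := card_le_two
  have h3 := Nat.pow_le_pow_right (n := 2) (by norm_num) (show 3 ≤ 3 * s by omega)
  norm_num at h3
  omega

lemma x_V_mod [Fintype F] {s : ℕ} (hF : Fintype.card F = 2 ^ (3 * s)) {ω : F}
    (h0 : ω ≠ 0) (a : ℤ) : xV s (ω ^ (a % (Mof s : ℤ))) = xV s (ω ^ a) := by
  have hM : ω ^ (Mof s) ∈ xE F s := by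
    rw [x_mem_E]
    refine ⟨pow_ne_zero _ h0, ?_⟩
    have : ω ^ Mof s = (ω ^ 2 ^ s) ^ 2 ^ s * ω ^ 2 ^ s * ω := by
      rw [Mof, pow_succ, pow_add, two_mul, pow_add 2, pow_mul]
    rw [this, mul_pow, mul_pow, x_cube hF]; ring
  have hz : ω ^ ((Mof s : ℤ) * (a / (Mof s : ℤ))) ∈ xE F s := by
    rw [x_mem_E] at *
    refine ⟨zpow_ne_zero _ h0, ?_⟩
    rw [zpow_mul, zpow_natCast, ← zpow_natCast (_ ^ _ : F) (2 ^ s), ← zpow_mul, mul_comm, zpow_mul,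
      zpow_natCast (ω ^ Mof s) (2 ^ s), hM.2]
  conv_rhs => rw [← Int.mul_ediv_add_emod a (Mof s : ℤ), zpow_add₀ h0, x_V_period hz]

lemma x_vals [Fintype F] [Algebra (ZMod 2) F] {s : ℕ} (hs : 1 ≤ s)
    (hF : Fintype.card F = 2 ^ (3 * s)) (c : F) :
    ((xV s c).card = 2 ^ s - 1 → psiSum F c (Dset F s) = -1) ∧
    ((xV s c).card = 2 * (2 ^ s - 1) → psiSum F c (Dset F s) = 2 ^ s - 1) ∧
    ((xV s c).card = 0 → psiSum F c (Dset F s) = -(2 ^ s) - 1) := by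
  have h := x_psiSum hs hF c
  have hq : 2 ≤ 2 ^ s := by simpa using Nat.pow_le_pow_right (n := 2) (by norm_num) hs
  have hq' : (2 : ℤ) ≤ 2 ^ s := by exact_mod_cast hq
  have hne : (2 : ℤ) ^ s - 1 ≠ 0 := by omega
  have hcast : ((2 ^ s - 1 : ℕ) : ℤ) = 2 ^ s - 1 := by
    rw [Nat.cast_sub Nat.one_le_two_pow]; simp
  have e : (2 : ℤ) ^ (2 * s) = 2 ^ s * 2 ^ s := by rw [two_mul, pow_add]
  refine ⟨fun hc => ?_, fun hc => ?_, fun hc => ?_⟩ <;> apply mul_left_cancel₀ hne <;>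
    rw [h, hc, e]
  · rw [hcast]; ring
  · rw [Nat.cast_mul, hcast]; push_cast; ring
  · push_cast; ring

end aux

theorem statement3 (s : ℕ) (hs : 1 ≤ s) (F : Type*) [Field F] [Fintype F] [Algebra (ZMod 2) F]
    (hF : Fintype.card F = 2 ^ (3 * s)) (ω : F)
    (hω : ∀ x : F, x ≠ 0 → ∃ n : ℕ, x = ω ^ n) :
    (∀ a : ℤ,
      (((a : ZMod (Mof s)) ∈ T1 s ω) → psiSum F (ω ^ a) (Dset F s) = -1) ∧
      (((a : ZMod (Mof s)) ∈ T2 s ω) → psiSum F (ω ^ a) (Dset F s) = 2 ^ s - 1) ∧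
      (((a : ZMod (Mof s)) ∈ T3 s ω) → psiSum F (ω ^ a) (Dset F s) = -(2 ^ s) - 1)) ∧
    (∀ v : ℤ,
      (∃ a : ℤ, 0 ≤ a ∧ a < (Mof s : ℤ) ∧ psiSum F (ω ^ a) (Dset F s) = v) ↔
        (v = -1 ∨ v = 2 ^ s - 1 ∨ v = -(2 ^ s) - 1)) := by
  have h0 : ω ≠ 0 := x_omega hs hF hω
  have hval : ∀ a : ℤ, (Sa s ω (((a : ZMod (Mof s)).val : ℕ) : ℤ)).ncard
      = (xV s (ω ^ a)).card := by
    intro a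
    have : NeZero (Mof s) := ⟨by simp⟩
    rw [x_Sa hF, ZMod.val_intCast, x_V_mod hF h0]
  refine ⟨fun a => ?_, fun v => ⟨?_, ?_⟩⟩
  · obtain ⟨h1, h2, h3⟩ := x_vals hs hF (ω ^ a)
    refine ⟨fun h => h1 ?_, fun h => h2 ?_, fun h => h3 ?_⟩
    · rw [← hval a]; exact h
    · rw [← hval a]; exact h
    · rw [← hval a]; exact h
  · rintro ⟨a, _, _, rfl⟩
    obtain ⟨h1, h2, h3⟩ := x_vals hs hF (ω ^ a)
    rcases x_tri hs hF (zpow_ne_zero a h0) with h | h | h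
    · exact Or.inr (Or.inr (h3 h))
    · exact Or.inl (h1 h.1)
    · exact Or.inr (Or.inl (h2 h))
  · have red : ∀ c : F, c ≠ 0 → ∃ a : ℤ, 0 ≤ a ∧ a < (Mof s : ℤ) ∧ xV s (ω ^ a) = xV s c := by
      intro c hc
      obtain ⟨n, rfl⟩ := hω c hc
      have hMpos : (0 : ℤ) < (Mof s : ℤ) := by
        have : 0 < Mof s := Nat.succ_pos _
        exact_mod_cast this
      refine ⟨(n : ℤ) % (Mof s : ℤ), Int.emod_nonneg _ hMpos.ne', Int.emod_lt_of_pos _ hMpos, ?_⟩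
      rw [x_V_mod hF h0, zpow_natCast]
    rintro (rfl | rfl | rfl)
    · obtain ⟨c, hc, hcard⟩ := x_card_one (F := F) hs hF
      obtain ⟨a, ha, ha', hV⟩ := red c hc
      exact ⟨a, ha, ha', (x_vals hs hF _).1 (by rw [hV, hcard])⟩
    · obtain ⟨c, hc, hcard⟩ := x_card_two (F := F) hs hF
      obtain ⟨a, ha, ha', hV⟩ := red c hc
      exact ⟨a, ha, ha', (x_vals hs hF _).2.1 (by rw [hV, hcard])⟩
    · obtain ⟨c, hc, hcard⟩ := x_card_zero (F := F) hs hF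
      obtain ⟨a, ha, ha', hV⟩ := red c hc
      exact ⟨a, ha, ha', (x_vals hs hF _).2.2 (by rw [hV, hcard])⟩
end
end

section
/- For every nonzero a ∈ ℤ/Mℤ, there is exactly one pair (i, j) ∈ T_1 × T_1 with i − j = a; that is, T_1 is a planar (Singer) difference set in ℤ/Mℤ with parameters (2^{2s}+2^s+1, 2^s+1, 1), so that T_1·T_1^{(−1)} = 2^s + ℤ/Mℤ in the group ring ℤ[ℤ/Mℤ]. -/
noncomputable section

open scoped BigOperators

/-- The `2^s`-power Frobenius. -/
def sig5 (F : Type*) [Field F] [CharP F 2] (s : ℕ) : F →+* F := iterateFrobenius F 2 s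

section aux5

variable {F : Type*} [Field F] [CharP F 2]

theorem sig5_apply (s : ℕ) (x : F) : sig5 F s x = x ^ (2 ^ s) := by
  simp [sig5, iterateFrobenius_def]

theorem trFE5_eq (s : ℕ) (x : F) :
    trFE s x = x + sig5 F s x + sig5 F s (sig5 F s x) := by
  simp only [trFE, sig5_apply, ← pow_mul, ← pow_add, two_mul]

theorem sig5_three [Fintype F] (s : ℕ) (hF : Fintype.card F = 2 ^ (3 * s)) (x : F) :
    sig5 F s (sig5 F s (sig5 F s x)) = x := by
  simp only [sig5_apply, ← pow_mul, ← pow_add]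
  have h := FiniteField.pow_card x
  rw [hF] at h
  convert h using 2
  ring_nf

theorem sig5_sq_root {s : ℕ} {x : F} (h : sig5 F s (x ^ 2) = x ^ 2) : sig5 F s x = x := by
  rw [map_pow] at h
  have h2 : (sig5 F s x - x) ^ 2 = 0 := by
    rw [sub_pow_char, h, sub_self]
  exact sub_eq_zero.mp (pow_eq_zero_iff (two_ne_zero) |>.mp h2)

theorem trFE5_smul (s : ℕ) (e x : F) (he : sig5 F s e = e) :
    trFE s (e * x) = e * trFE s x := by
  simp only [trFE5_eq, map_mul, he]; ring

theorem trFE5_sq (s : ℕ) (x : F) : trFE s (x ^ 2) = trFE s x ^ 2 := by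
  simp only [trFE5_eq, map_pow, add_pow_char]

/-- `Tr(u^{q+1}) = N(u) Tr(1/u)`. -/
theorem trFE5_conic [Fintype F] (s : ℕ) (hF : Fintype.card F = 2 ^ (3 * s)) (u : F) (hu : u ≠ 0) :
    trFE s (u ^ (2 ^ s + 1)) = 0 ↔ trFE s u⁻¹ = 0 := by
  have h1 : u ^ (2 ^ s + 1) = sig5 F s u * u := by rw [sig5_apply, pow_succ]
  rw [h1]
  simp only [trFE5_eq, map_mul, map_inv₀, sig5_three s hF]
  have h2 : sig5 F s u ≠ 0 := by simpa using hu
  have h3 : sig5 F s (sig5 F s u) ≠ 0 := by simpa using hu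
  generalize sig5 F s (sig5 F s u) = z at *
  generalize sig5 F s u = y at *
  have : u⁻¹ + y⁻¹ + z⁻¹ = (y * u + z * y + u * z) * (u * y * z)⁻¹ := by
    field_simp; ring
  rw [this]
  simp [hu, h2, h3]

theorem sig5_tangent_unique [Fintype F] (s : ℕ) (hF : Fintype.card F = 2 ^ (3 * s))
    (r t : F) (hr0 : r ≠ 0) (ht0 : t ≠ 0) (hr : trFE s r = 0) (h1 : trFE s (r * t) = 0)
    (h2 : trFE s (r * t⁻¹) = 0) : sig5 F s t = t := by
  have h3 := sig5_three s hF t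
  simp only [trFE5_eq, map_mul, map_inv₀] at hr h1 h2
  have hy : sig5 F s t ≠ 0 := by simpa using ht0
  have hz : sig5 F s (sig5 F s t) ≠ 0 := by simpa using ht0
  by_contra hne
  have hzt : sig5 F s (sig5 F s t) - t ≠ 0 := by
    intro h
    apply hne
    have := congrArg (sig5 F s) (sub_eq_zero.mp h)
    rw [h3] at this
    exact this.symm
  generalize sig5 F s (sig5 F s t) = z at *
  generalize sig5 F s t = y at *
  generalize sig5 F s (sig5 F s r) = r2 at *
  generalize sig5 F s r = r1 at *
  field_simp at h2
  have hr2 : r2 = - r - r1 := by linear_combination hr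
  subst hr2
  have key : r * (z - t) * (y - t) = 0 := by
    linear_combination h2 + t * h1
  have hyt : y - t ≠ 0 := sub_ne_zero.mpr hne
  exact mul_ne_zero (mul_ne_zero hr0 hzt) hyt key


/-- Common zeros of `Tr x` and `Tr (b x)` form a line. -/
theorem sig5_singer_exists [Fintype F] (s : ℕ) (hF : Fintype.card F = 2 ^ (3 * s)) (b : F) :
    trFE s (sig5 F s b - sig5 F s (sig5 F s b)) = 0 ∧
    trFE s (b * (sig5 F s b - sig5 F s (sig5 F s b))) = 0 := by
  simp only [trFE5_eq, map_mul, map_sub, sig5_three s hF]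
  constructor <;> ring

theorem sig5_singer_unique [Fintype F] (s : ℕ) (hF : Fintype.card F = 2 ^ (3 * s)) (b x : F)
    (hb : sig5 F s b ≠ b) (h1 : trFE s x = 0) (h2 : trFE s (b * x) = 0) :
    sig5 F s b - sig5 F s (sig5 F s b) ≠ 0 ∧
    sig5 F s (x / (sig5 F s b - sig5 F s (sig5 F s b))) =
      x / (sig5 F s b - sig5 F s (sig5 F s b)) := by
  have h0 : sig5 F s b - sig5 F s (sig5 F s b) ≠ 0 := by
    intro h
    exact hb ((sig5 F s).injective (sub_eq_zero.mp h)).symm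
  refine ⟨h0, ?_⟩
  have h0' : sig5 F s (sig5 F s b - sig5 F s (sig5 F s b)) ≠ 0 := by
    intro h
    exact h0 ((map_eq_zero _).mp h)
  rw [map_div₀, div_eq_div_iff h0' h0]
  simp only [trFE5_eq, map_mul, map_sub, sig5_three s hF] at *
  linear_combination h2 - sig5 F s (sig5 F s b) * h1

theorem fix5_iff (s : ℕ) (x : F) (hx : x ≠ 0) : sig5 F s x = x ↔ x ^ (2 ^ s - 1) = 1 := by
  rw [sig5_apply]
  have h : x ^ (2 ^ s) = x ^ (2 ^ s - 1) * x := by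
    rw [← pow_succ, Nat.sub_add_cancel Nat.one_le_two_pow]
  rw [h]
  constructor
  · intro h; exact mul_right_cancel₀ hx (by rw [h, one_mul])
  · intro h; rw [h, one_mul]

theorem Mof5_mul (s : ℕ) : 2 ^ (3 * s) - 1 = Mof s * (2 ^ s - 1) := by
  have h : (1 : ℕ) ≤ 2 ^ s := Nat.one_le_two_pow
  obtain ⟨k, hk⟩ := Nat.exists_eq_add_of_le h
  have e1 : 2 ^ (3 * s) = (2 ^ s) ^ 3 := by rw [← pow_mul, mul_comm]
  have e2 : 2 ^ (2 * s) = (2 ^ s) ^ 2 := by rw [← pow_mul, mul_comm]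
  rw [Mof, e1, e2, hk, Nat.add_sub_cancel_left]
  apply Nat.sub_eq_of_eq_add
  ring

theorem order5 [Fintype F] (s : ℕ) (hs : 1 ≤ s) (hF : Fintype.card F = 2 ^ (3 * s)) (ω : F)
    (hω : ∀ x : F, x ≠ 0 → ∃ n : ℕ, x = ω ^ n) :
    ω ≠ 0 ∧ orderOf ω = Mof s * (2 ^ s - 1) := by
  classical
  have h8 : 2 ^ 3 ≤ 2 ^ (3 * s) := Nat.pow_le_pow_right (by norm_num) (by omega)
  have hω0 : ω ≠ 0 := by
    rintro rfl
    have : (Finset.univ : Finset F) ⊆ {0, 1} := by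
      intro x _
      by_cases hx : x = 0
      · simp [hx]
      · obtain ⟨n, rfl⟩ := hω x hx
        rcases n with _ | n
        · simp
        · simp at hx
    have h2 := Finset.card_le_card this
    rw [Finset.card_univ, hF] at h2
    have := Finset.card_le_two (a := (0 : F)) (b := 1)
    omega
  refine ⟨hω0, ?_⟩
  rw [← Mof5_mul, ← hF, ← Fintype.card_units, ← Nat.card_eq_fintype_card]
  have : orderOf (Units.mk0 ω hω0) = orderOf ω := by
    rw [← orderOf_units]; rfl
  rw [← this]
  apply orderOf_eq_card_of_forall_mem_zpowers
  intro x
  obtain ⟨n, hn⟩ := hω x x.ne_zero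
  refine ⟨n, ?_⟩
  ext
  simp [hn]

theorem fix5_pow_iff [Fintype F] (s : ℕ) (hs : 1 ≤ s) (hF : Fintype.card F = 2 ^ (3 * s)) (ω : F)
    (hω : ∀ x : F, x ≠ 0 → ∃ n : ℕ, x = ω ^ n) (n : ℕ) :
    sig5 F s (ω ^ n) = ω ^ n ↔ Mof s ∣ n := by
  obtain ⟨h0, ho⟩ := order5 s hs hF ω hω
  have hq : 2 ^ 1 ≤ 2 ^ s := Nat.pow_le_pow_right (by norm_num) hs
  rw [fix5_iff s _ (pow_ne_zero _ h0), ← pow_mul, ← orderOf_dvd_iff_pow_eq_one, ho]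
  exact Nat.mul_dvd_mul_iff_right (by omega)

/-- The multiplicative group of the subfield. -/
def Est5 (F : Type*) [Field F] [CharP F 2] (s : ℕ) : Set F := {x | x ≠ 0 ∧ sig5 F s x = x}

theorem card5 [Fintype F] (s : ℕ) (hs : 1 ≤ s) (hF : Fintype.card F = 2 ^ (3 * s)) (ω : F)
    (hω : ∀ x : F, x ≠ 0 → ∃ n : ℕ, x = ω ^ n) : (Est5 F s).ncard = 2 ^ s - 1 := by
  classical
  obtain ⟨h0, ho⟩ := order5 s hs hF ω hω
  have hq : 2 ^ 1 ≤ 2 ^ s := Nat.pow_le_pow_right (by norm_num) hs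
  have hp : IsPrimitiveRoot (ω ^ Mof s) (2 ^ s - 1) := by
    refine IsPrimitiveRoot.pow ?_ (IsPrimitiveRoot.orderOf ω) ho
    rw [ho]; exact Nat.mul_pos (by simp [Mof]) (by omega)
  rw [← hp.card_nthRootsFinset, ← Set.ncard_coe_finset]
  congr 1
  ext x
  simp only [Est5, Set.mem_ofPred_eq, Finset.mem_coe,
    Polynomial.mem_nthRootsFinset (show 0 < 2 ^ s - 1 by omega)]
  constructor
  · rintro ⟨hx, h⟩; exact (fix5_iff s x hx).mp h
  · intro h
    have hx : x ≠ 0 := by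
      rintro rfl
      rw [zero_pow (by omega)] at h
      exact zero_ne_one h
    exact ⟨hx, (fix5_iff s x hx).mpr h⟩

theorem card5_smul [Fintype F] (s : ℕ) (hs : 1 ≤ s) (hF : Fintype.card F = 2 ^ (3 * s)) (ω : F)
    (hω : ∀ x : F, x ≠ 0 → ∃ n : ℕ, x = ω ^ n) (u : F) (hu : u ≠ 0) :
    ((fun e => e * u) '' Est5 F s).ncard = 2 ^ s - 1 := by
  rw [Set.ncard_image_of_injective _ (mul_left_injective₀ hu), card5 s hs hF ω hω]

/-- The set `S_a` with `c = ω^a`. -/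
def Sc5 (s : ℕ) (c : F) : Set F :=
  {u | u ≠ 0 ∧ trFE s (u ^ (2 ^ s + 1)) = 0 ∧ trFE s (c * u) = 0}

theorem main5 [Fintype F] (s : ℕ) (hs : 1 ≤ s) (hF : Fintype.card F = 2 ^ (3 * s)) (ω : F)
    (hω : ∀ x : F, x ≠ 0 → ∃ n : ℕ, x = ω ^ n) (c : F) (hc : c ≠ 0) :
    (Sc5 s c).ncard = 2 ^ s - 1 ↔ trFE s c = 0 := by
  classical
  have hq : 2 ^ 1 ≤ 2 ^ s := Nat.pow_le_pow_right (by norm_num) hs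
  have mem : ∀ u, u ∈ Sc5 s c ↔ u ≠ 0 ∧ trFE s u⁻¹ = 0 ∧ trFE s (c * u) = 0 := by
    intro u
    simp only [Sc5, Set.mem_ofPred_eq]
    constructor
    · rintro ⟨h, h1, h2⟩; exact ⟨h, (trFE5_conic s hF u h).mp h1, h2⟩
    · rintro ⟨h, h1, h2⟩; exact ⟨h, (trFE5_conic s hF u h).mpr h1, h2⟩
  have sub : ∀ u ∈ Sc5 s c, (fun e => e * u) '' Est5 F s ⊆ Sc5 s c := by
    rintro u hu _ ⟨e, ⟨he0, he⟩, rfl⟩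
    rw [mem] at hu ⊢
    obtain ⟨h, h1, h2⟩ := hu
    have he' : sig5 F s e⁻¹ = e⁻¹ := by rw [map_inv₀, he]
    refine ⟨mul_ne_zero he0 h, ?_, ?_⟩
    · rw [mul_inv, trFE5_smul s _ _ he', h1, mul_zero]
    · rw [mul_left_comm, trFE5_smul s _ _ he, h2, mul_zero]
  obtain ⟨r, hr⟩ : ∃ r : F, c = r ^ 2 := by
    obtain ⟨r, hr⟩ := FiniteField.isSquare_of_char_two (ringChar.eq F 2) c
    exact ⟨r, by rw [hr, sq]⟩
  have hr0 : r ≠ 0 := by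
    rintro rfl; simp at hr; exact hc hr
  have htr : trFE s c = 0 ↔ trFE s r = 0 := by
    rw [hr, trFE5_sq]; simp
  constructor
  · intro hcard
    by_contra hne
    have hne' : trFE s r ≠ 0 := fun h => hne (htr.mpr h)
    obtain ⟨u, hu⟩ : (Sc5 s c).Nonempty := by
      apply Set.nonempty_of_ncard_ne_zero; omega
    have heq : (fun e => e * u) '' Est5 F s = Sc5 s c := by
      apply Set.eq_of_subset_of_ncard_le (sub u hu)
      · rw [hcard, card5_smul s hs hF ω hω u ((mem u).mp hu).1]
    have hv : (u * c)⁻¹ ∈ Sc5 s c := by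
      rw [mem] at hu ⊢
      obtain ⟨h, h1, h2⟩ := hu
      refine ⟨inv_ne_zero (mul_ne_zero h hc), ?_, ?_⟩
      · rw [inv_inv, mul_comm, h2]
      · rw [← h1]; congr 1; field_simp
    rw [← heq] at hv
    obtain ⟨e, ⟨he0, he⟩, hv⟩ := hv
    obtain ⟨h, h1, h2⟩ := (mem u).mp hu
    have he2 : ((u * r)⁻¹) ^ 2 = e := by
      simp only [hr] at hv
      have : e = (u * r ^ 2)⁻¹ * u⁻¹ := by rw [← hv]; field_simp
      rw [this]; field_simp
    have he3 : sig5 F s (u * r)⁻¹ = (u * r)⁻¹ := by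
      apply sig5_sq_root; rw [he2, he]
    have he4 : sig5 F s (u * r) = u * r := by
      rw [map_inv₀] at he3; exact inv_injective he3
    have : c * u = (u * r) * r := by rw [hr]; ring
    rw [this, trFE5_smul s _ _ he4] at h2
    exact mul_ne_zero (mul_ne_zero h hr0) hne' h2
  · intro h
    have hr' := htr.mp h
    have hu : r⁻¹ ∈ Sc5 s c := by
      rw [mem]
      refine ⟨inv_ne_zero hr0, by rw [inv_inv, hr'], ?_⟩
      rw [← hr']; congr 1; rw [hr]; field_simp
    rw [← card5_smul s hs hF ω hω r⁻¹ (inv_ne_zero hr0)]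
    congr 1
    refine Set.Subset.antisymm ?_ (sub _ hu)
    intro u hu
    obtain ⟨h0, h1, h2⟩ := (mem u).mp hu
    refine ⟨u * r, ⟨mul_ne_zero h0 hr0, ?_⟩, by field_simp⟩
    apply sig5_tangent_unique s hF r _ hr0 (mul_ne_zero h0 hr0) hr'
    · rw [← h2, hr]; congr 1; ring
    · rw [← h1]; congr 1; field_simp

theorem memT1_5 [Fintype F] (s : ℕ) (hs : 1 ≤ s) (hF : Fintype.card F = 2 ^ (3 * s)) (ω : F)
    (hω : ∀ x : F, x ≠ 0 → ∃ n : ℕ, x = ω ^ n) (n : ℕ) :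
    (n : ZMod (Mof s)) ∈ T1 s ω ↔ trFE s (ω ^ n) = 0 := by
  obtain ⟨h0, ho⟩ := order5 s hs hF ω hω
  have h1 : (n : ZMod (Mof s)) ∈ T1 s ω ↔ trFE s (ω ^ (n % Mof s)) = 0 := by
    rw [← main5 s hs hF ω hω _ (pow_ne_zero _ h0)]
    simp only [T1, Sa, Sc5, Set.mem_ofPred_eq, ZMod.val_natCast, zpow_natCast]
  rw [h1]
  have h2 : ω ^ n = ω ^ (Mof s * (n / Mof s)) * ω ^ (n % Mof s) := by
    rw [← pow_add, Nat.div_add_mod]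
  have h3 := (fix5_pow_iff s hs hF ω hω (Mof s * (n / Mof s))).mpr (dvd_mul_right _ _)
  rw [h2, trFE5_smul s _ _ h3]
  simp [h0]

end aux5

theorem statement5 (s : ℕ) (hs : 1 ≤ s) (F : Type*) [Field F] [Fintype F]
    (hF : Fintype.card F = 2 ^ (3 * s)) (ω : F)
    (hω : ∀ x : F, x ≠ 0 → ∃ n : ℕ, x = ω ^ n) :
    ∀ a : ZMod (Mof s), a ≠ 0 →
      ∃! p : ZMod (Mof s) × ZMod (Mof s),
        p.1 ∈ T1 s ω ∧ p.2 ∈ T1 s ω ∧ p.1 - p.2 = a := by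
  intro a ha
  have : Fact (Nat.Prime 2) := ⟨Nat.prime_two⟩
  have : CharP F 2 := charP_of_card_eq_prime_pow hF
  obtain ⟨h0, ho⟩ := order5 s hs hF ω hω
  have hav : ((a.val : ℕ) : ZMod (Mof s)) = a := ZMod.natCast_zmod_val a
  have hb : sig5 F s (ω ^ a.val) ≠ ω ^ a.val := by
    rw [Ne, fix5_pow_iff s hs hF ω hω, ← ZMod.natCast_eq_zero_iff, hav]
    exact ha
  obtain ⟨e1, e2⟩ := sig5_singer_exists s hF (ω ^ a.val)
  have hu := fun x => sig5_singer_unique s hF (ω ^ a.val) x hb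
  have hw := (hu _ e1 e2).1
  obtain ⟨j, hj⟩ := hω _ hw
  rw [hj] at e1 e2 hu
  refine ⟨((a.val + j : ℕ), (j : ℕ)), ⟨?_, ?_, ?_⟩, ?_⟩
  · rw [memT1_5 s hs hF ω hω, pow_add]; exact e2
  · rw [memT1_5 s hs hF ω hω]; exact e1
  · simp
  · rintro ⟨i', j'⟩ ⟨m1, m2, m3⟩
    simp only at m1 m2 m3
    have hi' : i' = ((a.val + j'.val : ℕ) : ZMod (Mof s)) := by
      rw [Nat.cast_add, hav, ZMod.natCast_zmod_val, ← m3]; ring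
    have hj' : j' = ((j'.val : ℕ) : ZMod (Mof s)) := (ZMod.natCast_zmod_val j').symm
    rw [hi', memT1_5 s hs hF ω hω, pow_add] at m1
    rw [hj', memT1_5 s hs hF ω hω] at m2
    have h3 := (hu _ m2 m1).2
    obtain ⟨k, hk⟩ := hω (ω ^ j'.val / ω ^ j) (div_ne_zero (pow_ne_zero _ h0) (pow_ne_zero _ h0))
    rw [hk, fix5_pow_iff s hs hF ω hω] at h3
    rw [div_eq_iff (pow_ne_zero _ h0), ← pow_add] at hk
    have hk2 : (Units.mk0 ω h0) ^ j'.val = (Units.mk0 ω h0) ^ (k + j) := by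
      ext; simpa using hk
    have ho2 : orderOf (Units.mk0 ω h0) = Mof s * (2 ^ s - 1) := by
      rw [← ho, ← orderOf_units]; rfl
    rw [pow_eq_pow_iff_modEq, ho2] at hk2
    have h4 : j'.val ≡ k + j [MOD Mof s] := Nat.ModEq.of_mul_right _ hk2
    have h5 := (ZMod.natCast_eq_natCast_iff _ _ _).mpr h4
    rw [Nat.cast_add, (ZMod.natCast_eq_zero_iff _ _).mpr h3, zero_add, ← hj'] at h5
    rw [Prod.mk.injEq]
    refine ⟨?_, h5⟩
    rw [hi', Nat.cast_add, Nat.cast_add, ← hj', h5]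
end
end

section
/- For every a ∈ ℤ/Mℤ, #{(i, j) ∈ T_2 × T_1 : i − j = a} − #{(i, j) ∈ T_3 × T_1 : i − j = a} equals 2^s if a ∈ T_1 and equals 0 otherwise; that is, (T_2 − T_3)·T_1^{(−1)} = 2^s·T_1 in the group ring ℤ[ℤ/Mℤ]. -/
noncomputable section

open scoped BigOperators

section helpers
open Finset
set_option linter.unusedSectionVars false
set_option linter.unusedVariables false
variable {F : Type*} [Field F] [CharP F 2] (φ : F →+* F)

def Tp : F →+ F where
  toFun x := x + φ x + φ (φ x)
  map_zero' := by simp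
  map_add' x y := by simp only [map_add]; ring

theorem Tp_apply (x : F) : Tp φ x = x + φ x + φ (φ x) := rfl

theorem Tp_smul (c x : F) (hc : φ c = c) : Tp φ (c * x) = c * Tp φ x := by
  simp only [Tp_apply, map_mul, hc]; ring

theorem Tp_fix (h3 : ∀ x, φ (φ (φ x)) = x) (x : F) : φ (Tp φ x) = Tp φ x := by
  simp only [Tp_apply, map_add, h3]; ring

theorem Tp_inv (h3 : ∀ x, φ (φ (φ x)) = x) (u : F) (hu : u ≠ 0) :
    Tp φ (u * φ u) = 0 ↔ Tp φ u⁻¹ = 0 := by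
  have h1 : φ u ≠ 0 := by simpa using hu
  have h2 : φ (φ u) ≠ 0 := by simpa using hu
  have : Tp φ (u * φ u) = (u * φ u * φ (φ u)) * Tp φ u⁻¹ := by
    simp only [Tp_apply, map_mul, map_inv₀, h3]
    field_simp
    ring
  rw [this]; simp [hu]

theorem Tp_sq (x : F) : Tp φ (x * x) = Tp φ x * Tp φ x := by
  simp only [Tp_apply, map_mul]
  have : (2:F) = 0 := CharTwo.two_eq_zero
  linear_combination (-(x * φ x) - x * φ (φ x) - φ x * φ (φ x)) * this

theorem quad (h3 : ∀ x, φ (φ (φ x)) = x) (x v : F) (hv : v ≠ 0) (h1 : Tp φ v = 0) (h2 : Tp φ (x / v) = 0) :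
    x * φ v ^ 2 + Tp φ x * (v * φ v) + φ x * v ^ 2 = 0 := by
  have e1 : φ v ≠ 0 := by simpa using hv
  have e2 : φ (φ v) ≠ 0 := by simpa using hv
  have t : (2:F) = 0 := CharTwo.two_eq_zero
  have e3 : φ (φ v) = v + φ v := by
    rw [Tp_apply] at h1
    linear_combination h1 - (v + φ v) * t
  rw [e3] at e2
  simp only [Tp_apply, map_div₀, e3] at h2 ⊢
  field_simp at h2
  linear_combination h2

theorem key (h3 : ∀ x, φ (φ (φ x)) = x) (x v w : F) (hx : x ≠ 0) (hv : v ≠ 0) (h1 : Tp φ v = 0) (h2 : Tp φ (x / v) = 0)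
    (hw : w ≠ 0) (h1' : Tp φ w = 0) (h2' : Tp φ (x / w) = 0) :
    φ (w / v) = w / v ∨ φ (w / (x / v)) = w / (x / v) := by
  have a := quad φ h3 x v hv h1 h2
  have b := quad φ h3 x w hw h1' h2'
  have t : (2:F) = 0 := CharTwo.two_eq_zero
  have e1 : φ v ≠ 0 := by simpa using hv
  have e2 : φ w ≠ 0 := by simpa using hw
  have e3 : φ x ≠ 0 := by simpa using hx
  simp only [map_div₀]
  have : (φ w * v - w * φ v) * (φ w * φ v * x - w * v * φ x) = 0 := by
    linear_combination (v * φ v) * b - (w * φ w) * a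
  rcases mul_eq_zero.1 this with h | h
  · left; field_simp; linear_combination h
  · right; field_simp; linear_combination h

section counting
variable [Fintype F] [DecidableEq F]

theorem fiber_bound {G : Type*} [AddGroup G] [DecidableEq G] (f : F →+ G) (S : Finset G) (hf : ∀ x, f x ∈ S) :
    Fintype.card F ≤ #{x : F | f x = 0} * #S := by
  apply Finset.card_le_mul_card_image_of_maps_to (f := f) (fun a _ => hf a)
  intro b _
  by_cases h : ∃ a, f a = b
  · obtain ⟨a, rfl⟩ := h
    apply Finset.card_le_card_of_injOn (fun x => x - a)
    · intro x hx
      simp at hx ⊢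
      simp [hx]
    · intro x _ y _ h
      simpa using h
  · push Not at h
    rw [Finset.filter_false_of_mem]
    · simp
    · intro x _; exact h x

/-- the fixed field -/
def Ef : Finset F := {x : F | φ x = x}

theorem mem_Ef (x : F) : x ∈ Ef φ ↔ φ x = x := by simp [Ef]

theorem Ef_le (q : ℕ) (hq : 1 < q) (hφ : ∀ x, φ x = x ^ q) : #(Ef φ) ≤ q := by
  have hd := FiniteField.X_pow_card_sub_X_natDegree_eq F hq
  have hn := FiniteField.X_pow_card_sub_X_ne_zero F hq
  rw [← hd]
  apply Polynomial.card_le_degree_of_subset_roots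
  intro x hx
  rw [Finset.mem_val, mem_Ef, hφ] at hx
  rw [Polynomial.mem_roots hn]
  simp [hx]

theorem ker_le (q : ℕ) (hq : 1 < q) (hφ : ∀ x, φ x = x ^ q) : #{x : F | Tp φ x = 0} ≤ q ^ 2 := by
  have hd : ((Polynomial.X ^ q + Polynomial.X : Polynomial F)).degree < (q ^ 2 : ℕ) := by
    refine lt_of_le_of_lt (Polynomial.degree_add_le _ _) (max_lt ?_ ?_)
    · rw [Polynomial.degree_X_pow]; exact_mod_cast (by nlinarith : q < q ^ 2)
    · rw [Polynomial.degree_X]; exact_mod_cast (by nlinarith : 1 < q ^ 2)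
  have hm := Polynomial.monic_X_pow_add hd
  have hd2 := Polynomial.natDegree_eq_of_degree_eq_some ((Polynomial.degree_add_eq_left_of_degree_lt (p := Polynomial.X ^ (q ^ 2)) (q := Polynomial.X ^ q + Polynomial.X) (by rw [Polynomial.degree_X_pow]; exact hd)).trans (Polynomial.degree_X_pow (R := F) (q ^ 2)))
  rw [← hd2]
  apply Polynomial.card_le_degree_of_subset_roots
  intro x hx
  rw [Finset.mem_val, Finset.mem_filter, Tp_apply, hφ, hφ] at hx
  rw [Polynomial.mem_roots hm.ne_zero]
  have := hx.2
  simp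
  rw [← this]; ring

theorem T_E (h3 : ∀ x, φ (φ (φ x)) = x) (q : ℕ) (hq : 1 < q) (hφ : ∀ x, φ x = x ^ q)
    (hF : Fintype.card F = q ^ 3) : #(Ef φ) = q ∧ #{x : F | Tp φ x = 0} = q ^ 2 := by
  have a := fiber_bound (Tp φ) (Ef φ) (fun x => by rw [mem_Ef]; exact Tp_fix φ h3 x)
  have b := Ef_le φ q hq hφ
  have c := ker_le φ q hq hφ
  rw [hF] at a
  constructor
  · apply le_antisymm b
    have : q ^ 2 * q ≤ q ^ 2 * #(Ef φ) := by
      calc _ = q ^ 3 := by ring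
        _ ≤ _ := a
        _ ≤ _ := Nat.mul_le_mul_right _ c
    exact Nat.le_of_mul_le_mul_left this (by positivity)
  · apply le_antisymm c
    have : q ^ 2 * q ≤ #{x : F | Tp φ x = 0} * q := by
      calc _ = q ^ 3 := by ring
        _ ≤ _ := a
        _ ≤ _ := Nat.mul_le_mul_left _ b
    exact Nat.le_of_mul_le_mul_right this (by positivity)

theorem K2_le (h3 : ∀ x, φ (φ (φ x)) = x) (c : F) (hc : φ c ≠ c) :
    #{x : F | Tp φ x = 0 ∧ Tp φ (c * x) = 0} ≤ #(Ef φ) := by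
  by_cases h : ∃ y, y ≠ 0 ∧ Tp φ y = 0 ∧ Tp φ (c * y) = 0
  · obtain ⟨y, hy, h1, h2⟩ := h
    have t : (2:F) = 0 := CharTwo.two_eq_zero
    have hc2 : φ (φ c) ≠ φ c := fun h => hc (φ.injective h)
    have hk : ∀ x, Tp φ x = 0 → Tp φ (c * x) = 0 → (φ (φ c) - c) * x = (φ c - φ (φ c)) * φ x := by
      intro x h1 h2
      simp only [Tp_apply, map_mul] at h1 h2
      linear_combination φ (φ c) * h1 - h2 
    apply Finset.card_le_card_of_injOn (fun x => x / y)
    · intro x hx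
      simp at hx
      have a := hk x hx.1 hx.2
      have b := hk y h1 h2
      have e1 : φ y ≠ 0 := by simpa using hy
      simp only [Finset.mem_coe, mem_Ef, map_div₀]
      field_simp
      have : (φ c - φ (φ c)) * (φ x * y - φ y * x) = 0 := by
        linear_combination b * x - a * y
      rcases mul_eq_zero.1 this with h | h
      · exact absurd (sub_eq_zero.1 h).symm hc2
      · linear_combination h
    · intro x _ z _ h
      simpa [hy] using h
  · push Not at h
    apply Finset.card_le_card
    intro x hx
    simp at hx
    have : x = 0 := by
      by_contra h0
      exact h x h0 hx.1 hx.2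
    simp [this, mem_Ef]

theorem K2_eq (h3 : ∀ x, φ (φ (φ x)) = x) (q : ℕ) (hq : 1 < q) (hφ : ∀ x, φ x = x ^ q)
    (hF : Fintype.card F = q ^ 3) (c : F) (hc : φ c ≠ c) :
    #{x : F | Tp φ x = 0 ∧ Tp φ (c * x) = 0} = q := by
  obtain ⟨hE, -⟩ := T_E φ h3 q hq hφ hF
  have u := K2_le φ h3 c hc
  rw [hE] at u
  apply le_antisymm u
  have a := fiber_bound ((Tp φ).prod ((Tp φ).comp (AddMonoidHom.mulLeft c))) (Ef φ ×ˢ Ef φ)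
    (fun x => by simp [mem_Ef, Tp_fix φ h3])
  rw [hF, Finset.card_product, hE] at a
  simp only [AddMonoidHom.prod_apply, Prod.mk_eq_zero, AddMonoidHom.comp_apply, AddMonoidHom.coe_mulLeft] at a
  have : q * (q * q) ≤ #{x : F | Tp φ x = 0 ∧ Tp φ (c * x) = 0} * (q * q) := by
    refine le_trans (le_of_eq (by ring)) a
  exact Nat.le_of_mul_le_mul_right this (by positivity)

/-- the set counted by `S_a` after inversion -/
def Ax (x : F) : Finset F := {v : F | v ≠ 0 ∧ Tp φ v = 0 ∧ Tp φ (x / v) = 0}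

/-- multiples of `v` by the nonzero elements of the fixed field -/
def Lv (v : F) : Finset F := ((Ef φ).erase 0).image (· * v)

theorem mem_Lv (v w : F) (hv : v ≠ 0) : w ∈ Lv φ v ↔ w ≠ 0 ∧ φ (w / v) = w / v := by
  simp only [Lv, Finset.mem_image, Finset.mem_erase, mem_Ef]
  constructor
  · rintro ⟨c, ⟨h0, h⟩, rfl⟩
    have : c * v / v = c := by field_simp
    rw [this]; exact ⟨mul_ne_zero h0 hv, h⟩
  · rintro ⟨h0, h⟩
    exact ⟨w / v, ⟨div_ne_zero h0 hv, h⟩, by field_simp⟩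

theorem card_Lv (v : F) (hv : v ≠ 0) : #(Lv φ v) = #(Ef φ) - 1 := by
  rw [Lv, Finset.card_image_of_injective, Finset.card_erase_of_mem]
  · simp [mem_Ef]
  · exact mul_left_injective₀ hv

theorem Ax_eq (h3 : ∀ x, φ (φ (φ x)) = x) (x v : F) (hx : x ≠ 0) (hv : v ∈ Ax φ x) :
    Ax φ x = Lv φ v ∪ Lv φ (x / v) := by
  simp only [Ax, Finset.mem_filter, Finset.mem_univ, true_and] at hv
  obtain ⟨hv, h1, h2⟩ := hv
  have hxv : x / v ≠ 0 := div_ne_zero hx hv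
  ext w
  rw [Finset.mem_union, mem_Lv _ _ _ hv, mem_Lv _ _ _ hxv, ← and_or_left]
  simp only [Ax, Finset.mem_filter, Finset.mem_univ, true_and]
  apply and_congr_right
  intro hw
  constructor
  · rintro ⟨a, b⟩
    exact key φ h3 x v w hx hv h1 h2 hw a b
  · rintro (h | h)
    · constructor
      · have : w = (w / v) * v := by field_simp
        rw [this, Tp_smul _ _ _ h, h1, mul_zero]
      · have : x / w = (w / v)⁻¹ * (x / v) := by field_simp
        rw [this, Tp_smul _ _ _ (by rw [map_inv₀, h]), h2, mul_zero]
    · constructor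
      · have : w = (w / (x / v)) * (x / v) := by field_simp
        rw [this, Tp_smul _ _ _ h, h2, mul_zero]
      · have : x / w = (w / (x / v))⁻¹ * v := by field_simp
        rw [this, Tp_smul _ _ _ (by rw [map_inv₀, h]), h1, mul_zero]

theorem card_Ax0 (h3 : ∀ x, φ (φ (φ x)) = x) (x : F) (hx : x ≠ 0) (hT : Tp φ x = 0) :
    #(Ax φ x) = #(Ef φ) - 1 := by
  obtain ⟨v, rfl⟩ : ∃ v, x = v * v := by
    obtain ⟨v, hv⟩ := (FiniteField.isSquare_of_char_two (CharP.eq F (ringChar.charP F) inferInstance) x)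
    exact ⟨v, hv⟩
  have hv : v ≠ 0 := by rintro rfl; simp at hx
  have e : v * v / v = v := by field_simp
  have h1 : Tp φ v = 0 := by
    rw [Tp_sq] at hT; simpa using hT
  rw [Ax_eq φ h3 _ v hx, e, Finset.union_self, card_Lv _ _ hv]
  simp [Ax, hv, h1]

theorem card_Ax1 (h3 : ∀ x, φ (φ (φ x)) = x) (x : F) (hx : x ≠ 0) (hT : Tp φ x ≠ 0) :
    #(Ax φ x) = 0 ∨ #(Ax φ x) = 2 * (#(Ef φ) - 1) := by
  by_cases h : (Ax φ x).Nonempty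
  · right
    obtain ⟨v, hv⟩ := h
    rw [Ax_eq φ h3 x v hx hv]
    simp only [Ax, Finset.mem_filter, Finset.mem_univ, true_and] at hv
    obtain ⟨hv, h1, h2⟩ := hv
    have hxv : x / v ≠ 0 := div_ne_zero hx hv
    rw [Finset.card_union_of_disjoint, card_Lv _ _ hv, card_Lv _ _ hxv]
    · ring
    · rw [Finset.disjoint_left]
      intro w hw hw'
      rw [mem_Lv _ _ _ hv] at hw
      rw [mem_Lv _ _ _ hxv] at hw'
      apply hT
      have hw0 := hw.1
      have : x = (w / v) / (w / (x / v)) * (v * v) := by field_simp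
      rw [this, Tp_smul _ _ _ (by rw [map_div₀, hw.2, hw'.2]), Tp_sq, h1]; simp
  · left
    rw [Finset.not_nonempty_iff_eq_empty] at h
    simp [h]

/-- main double count; `b ≠ 0` -/
theorem main_count (h3 : ∀ x, φ (φ (φ x)) = x) (q : ℕ) (hq : 1 < q) (hφ : ∀ x, φ x = x ^ q)
    (hF : Fintype.card F = q ^ 3) (b : F) (hb : b ≠ 0) :
    ∑ x : F with x ≠ 0 ∧ Tp φ x = 0, (#(Ax φ (b * x)) : ℤ) =
      ((q : ℤ) ^ 2 - 1) * (q - 1) + if Tp φ b = 0 then ((q : ℤ) - 1) * (q ^ 2 - q) else 0 := by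
  obtain ⟨hE, hK⟩ := T_E φ h3 q hq hφ hF
  have s1 : ∀ v : F, v ≠ 0 → (#{x : F | (x ≠ 0 ∧ Tp φ x = 0) ∧ Tp φ (b * x / v) = 0} : ℤ) =
      (q - 1) + if v ∈ Lv φ b then (q ^ 2 - q : ℤ) else 0 := by
    intro v hv
    have e : ({x : F | (x ≠ 0 ∧ Tp φ x = 0) ∧ Tp φ (b * x / v) = 0} : Finset F) =
        ({x : F | Tp φ x = 0 ∧ Tp φ ((b / v) * x) = 0} : Finset F).erase 0 := by
      ext x; simp [and_assoc, div_mul_eq_mul_div]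
    rw [e, Finset.card_erase_of_mem (by simp)]
    split_ifs with h
    · rw [mem_Lv _ _ _ hb] at h
      have : ({x : F | Tp φ x = 0 ∧ Tp φ ((b / v) * x) = 0} : Finset F) =
         ({x : F | Tp φ x = 0} : Finset F) := by
        apply Finset.filter_congr
        intro x _
        have h' : φ (b / v) = b / v := by
          rw [← inv_div, map_inv₀, h.2]
        rw [Tp_smul _ _ _ h']
        constructor
        · exact fun h => h.1
        · intro h; simp [h]
      rw [this, hK, Nat.cast_sub (Nat.one_le_pow _ _ (by omega))]
      push_cast; ring
    · rw [K2_eq φ h3 q hq hφ hF, Nat.cast_sub (by omega)]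
      · simp
      · intro h'
        apply h
        rw [mem_Lv _ _ _ hb]
        exact ⟨hv, by rw [← inv_div, map_inv₀, h']⟩
  have s2 : ∑ x : F with x ≠ 0 ∧ Tp φ x = 0, (#(Ax φ (b * x)) : ℤ) =
      ∑ v : F with v ≠ 0 ∧ Tp φ v = 0, (#{x : F | (x ≠ 0 ∧ Tp φ x = 0) ∧ Tp φ (b * x / v) = 0} : ℤ) := by
    have l : ∀ x, (#(Ax φ (b * x)) : ℤ) = ∑ v : F with v ≠ 0 ∧ Tp φ v = 0, if Tp φ (b * x / v) = 0 then 1 else 0 := by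
      intro x
      rw [Finset.sum_boole, Finset.filter_filter]
      simp [Ax, and_assoc]
    have r : ∀ v, (#{x : F | (x ≠ 0 ∧ Tp φ x = 0) ∧ Tp φ (b * x / v) = 0} : ℤ) =
       ∑ x : F with x ≠ 0 ∧ Tp φ x = 0, if Tp φ (b * x / v) = 0 then 1 else 0 := by
      intro x
      rw [Finset.sum_boole, Finset.filter_filter]
    simp_rw [l, r]
    rw [Finset.sum_comm]
  rw [s2, Finset.sum_congr rfl (g := fun v => (q - 1 : ℤ) + if v ∈ Lv φ b then (q ^ 2 - q : ℤ) else 0)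
    (fun v hv => s1 v (by simp at hv; exact hv.1))]
  rw [Finset.sum_add_distrib, Finset.sum_const, ← Finset.sum_filter, Finset.sum_const, Finset.filter_filter]
  have c1 : #{v : F | v ≠ 0 ∧ Tp φ v = 0} = q ^ 2 - 1 := by
    have : ({v : F | v ≠ 0 ∧ Tp φ v = 0} : Finset F) = ({v : F | Tp φ v = 0} : Finset F).erase 0 := by
      ext x; simp
    rw [this, Finset.card_erase_of_mem (by simp), hK]
  rw [c1]
  have c2 : #{v : F | (v ≠ 0 ∧ Tp φ v = 0) ∧ v ∈ Lv φ b} = if Tp φ b = 0 then q - 1 else 0 := by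
    have hT : ∀ v ∈ Lv φ b, (v ≠ 0 ∧ (Tp φ v = 0 ↔ Tp φ b = 0)) := by
      intro v hv
      rw [mem_Lv _ _ _ hb] at hv
      refine ⟨hv.1, ?_⟩
      have : v = (v / b) * b := by field_simp
      rw [this, Tp_smul _ _ _ hv.2]
      simp [hv.1, hb]
    split_ifs with h
    · rw [← hE, ← card_Lv φ b hb]
      congr 1
      ext v
      simp only [Finset.mem_filter, Finset.mem_univ, true_and]
      constructor
      · exact fun h => h.2
      · intro h'; exact ⟨⟨(hT v h').1, (hT v h').2.2 h⟩, h'⟩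
    · rw [Finset.card_eq_zero, Finset.filter_eq_empty_iff]
      rintro v - ⟨⟨_, h1⟩, h2⟩
      exact h ((hT v h2).2.1 h1)
  rw [c2]
  split_ifs
  · rw [nsmul_eq_mul, nsmul_eq_mul, Nat.cast_sub (Nat.one_le_pow _ _ (by omega)), Nat.cast_sub (by omega)]
    push_cast; ring
  · rw [nsmul_eq_mul, Nat.cast_sub (Nat.one_le_pow _ _ (by omega))]
    push_cast; simp

theorem sum_reps (h3 : ∀ x, φ (φ (φ x)) = x) (q M : ℕ) [NeZero M] (hq : 1 < q) (hφ : ∀ x, φ x = x ^ q)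
    (hF : Fintype.card F = q ^ 3) (hM : M * (q - 1) = q ^ 3 - 1) (ω : F)
    (hred : ∀ n : ℕ, ∃ c : F, c ≠ 0 ∧ φ c = c ∧ ω ^ n = c * ω ^ (n % M)) (hω0 : ω ≠ 0)
    (hω : ∀ x : F, x ≠ 0 → ∃ n : ℕ, x = ω ^ n)
    (g : F → ℤ) (hg : ∀ c x, c ≠ 0 → φ c = c → g (c * x) = g x) :
    ((q : ℤ) - 1) * ∑ j : ZMod M, g (ω ^ j.val) = ∑ x : F with x ≠ 0, g x := by
  classical
  obtain ⟨hE, hK⟩ := T_E φ h3 q hq hφ hF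
  have hE1 : #((Ef φ).erase 0) = q - 1 := by
    rw [Finset.card_erase_of_mem (by simp [mem_Ef]), hE]
  set P : Finset (F × ZMod M) := ((Ef φ).erase 0) ×ˢ Finset.univ
  let f : F × ZMod M → F := fun p => p.1 * ω ^ p.2.val
  have himg : P.image f = ({x : F | x ≠ 0} : Finset F) := by
    ext x
    simp only [Finset.mem_image, Finset.mem_filter, Finset.mem_univ, true_and, P, Finset.mem_product,
      Finset.mem_erase, mem_Ef, and_true, f, Prod.exists]
    constructor
    · rintro ⟨c, j, ⟨h, _⟩, rfl⟩
      exact mul_ne_zero h (pow_ne_zero _ hω0)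
    · intro hx
      obtain ⟨n, rfl⟩ := hω x hx
      obtain ⟨c, h0, h1, h2⟩ := hred n
      refine ⟨c, (n : ZMod M), ⟨h0, h1⟩, ?_⟩
      rw [ZMod.val_natCast, h2]
  have hcard : #(P.image f) = #P := by
    rw [himg]
    have : ({x : F | x ≠ 0} : Finset F) = Finset.univ.erase 0 := by ext x; simp
    rw [this, Finset.card_erase_of_mem (Finset.mem_univ _), Finset.card_univ, hF, ← hM]
    simp only [P, Finset.card_product, hE1, Finset.card_univ, ZMod.card]
    ring
  have hinj := Finset.card_image_iff.1 hcard
  rw [← himg, Finset.sum_image hinj, Finset.sum_product]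
  have : ∀ c ∈ (Ef φ).erase 0, ∑ j : ZMod M, g (f (c, j)) = ∑ j : ZMod M, g (ω ^ j.val) := by
    intro c hc
    simp only [Finset.mem_erase, mem_Ef] at hc
    exact Finset.sum_congr rfl (fun j _ => hg _ _ hc.1 hc.2)
  rw [Finset.sum_congr rfl this, Finset.sum_const, hE1, nsmul_eq_mul, Nat.cast_sub (by omega)]
  simp

theorem Ax_smul (c x : F) (h0 : c ≠ 0) (hc : φ c = c) : Ax φ (c * x) = Ax φ x := by
  unfold Ax
  apply Finset.filter_congr
  intro v _
  rw [mul_div_assoc, Tp_smul _ _ _ hc]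
  simp [h0]

end counting

theorem trFE_eq (s : ℕ) (hφ : ∀ x, φ x = x ^ (2 ^ s)) (x : F) : trFE s x = Tp φ x := by
  rw [trFE, Tp_apply, hφ, hφ, ← pow_mul, ← pow_add, two_mul]

theorem Sa_card [Fintype F] [DecidableEq F] (h3 : ∀ x, φ (φ (φ x)) = x) (s : ℕ)
    (hφ : ∀ x, φ x = x ^ (2 ^ s)) (ω : F) (n : ℕ) :
    (Sa s ω (n : ℤ)).ncard = #(Ax φ (ω ^ n)) := by
  have : Sa s ω (n : ℤ) = (fun x : F => x⁻¹) '' (Ax φ (ω ^ n) : Set F) := by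
    ext u
    simp only [Sa, Set.mem_ofPred_eq, Set.mem_image, Finset.mem_coe, Ax, Finset.mem_filter,
      Finset.mem_univ, true_and, trFE_eq φ s hφ, zpow_natCast]
    have e : u ^ (2 ^ s + 1) = u * φ u := by rw [hφ]; ring
    rw [e]
    constructor
    · rintro ⟨h0, h1, h2⟩
      exact ⟨u⁻¹, ⟨inv_ne_zero h0, (Tp_inv φ h3 u h0).1 h1, by simpa using h2⟩, inv_inv u⟩
    · rintro ⟨v, ⟨h0, h1, h2⟩, rfl⟩
      refine ⟨inv_ne_zero h0, (Tp_inv φ h3 _ (inv_ne_zero h0)).2 (by simpa using h1), ?_⟩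
      simpa [div_eq_mul_inv] using h2
  rw [this, Set.ncard_image_of_injective _ inv_injective, Set.ncard_coe_finset]

theorem pair_card {M : ℕ} [NeZero M] (A B : Set (ZMod M)) [DecidablePred (· ∈ A)] [DecidablePred (· ∈ B)] (a : ZMod M) :
    ({p : ZMod M × ZMod M | p.1 ∈ A ∧ p.2 ∈ B ∧ p.1 - p.2 = a}.ncard : ℤ) =
    ∑ j : ZMod M, if j ∈ B ∧ j + a ∈ A then 1 else 0 := by
  have : {p : ZMod M × ZMod M | p.1 ∈ A ∧ p.2 ∈ B ∧ p.1 - p.2 = a} =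
      (fun j => (j + a, j)) '' ((({j : ZMod M | j ∈ B ∧ j + a ∈ A} : Finset (ZMod M))) : Set (ZMod M)) := by
    ext ⟨i, j⟩
    simp only [Set.mem_ofPred_eq, Set.mem_image, Finset.mem_coe, Finset.mem_filter, Finset.mem_univ,
      true_and, Prod.mk.injEq]
    constructor
    · rintro ⟨h1, h2, rfl⟩
      exact ⟨j, ⟨h2, by simpa using h1⟩, by ring, rfl⟩
    · rintro ⟨k, ⟨h1, h2⟩, rfl, rfl⟩
      exact ⟨h2, h1, by ring⟩
  rw [this, Set.ncard_image_of_injective _ (fun x y h => (Prod.mk.inj h).2), Set.ncard_coe_finset,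
    Finset.sum_boole]

end helpers

open scoped Finset

theorem statement7 (s : ℕ) (hs : 1 ≤ s) (F : Type*) [Field F] [Fintype F]
    (hF : Fintype.card F = 2 ^ (3 * s)) (ω : F)
    (hω : ∀ x : F, x ≠ 0 → ∃ n : ℕ, x = ω ^ n) :
    ∀ a : ZMod (Mof s),
      (({p : ZMod (Mof s) × ZMod (Mof s) | p.1 ∈ T2 s ω ∧ p.2 ∈ T1 s ω ∧ p.1 - p.2 = a}.ncard : ℤ) -
       ({p : ZMod (Mof s) × ZMod (Mof s) | p.1 ∈ T3 s ω ∧ p.2 ∈ T1 s ω ∧ p.1 - p.2 = a}.ncard : ℤ)) =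
        2 ^ s * Ind (a ∈ T1 s ω) := by
  intro a
  classical
  set q : ℕ := 2 ^ s with hqdef
  have hq : 1 < q := Nat.one_lt_two_pow (by omega)
  have hFq : Fintype.card F = q ^ 3 := by rw [hF, hqdef, ← pow_mul, mul_comm]
  have : Fact (Nat.Prime 2) := ⟨Nat.prime_two⟩
  have : CharP F 2 := charP_of_card_eq_prime_pow (f := 3 * s) (by rw [← hF])
  let φ : F →+* F := iterateFrobenius F 2 s
  have hφ : ∀ x, φ x = x ^ q := fun x => iterateFrobenius_def ..
  have h3 : ∀ x, φ (φ (φ x)) = x := by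
    intro x
    rw [hφ, hφ, hφ, ← pow_mul, ← pow_mul]
    have : q * (q * q) = Fintype.card F := by rw [hFq]; ring
    rw [this, FiniteField.pow_card]
  have hMq : Mof s = q ^ 2 + q + 1 := by
    simp only [Mof, hqdef]; rw [← pow_mul, mul_comm]
  have hM : Mof s * (q - 1) = q ^ 3 - 1 := by
    rw [hMq]
    obtain ⟨r, hr⟩ : ∃ r, q = r + 1 := ⟨q - 1, by omega⟩
    rw [hr]; simp only [Nat.add_sub_cancel]
    symm; apply Nat.sub_eq_of_eq_add; ring
  have hω0 : ω ≠ 0 := by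
    rintro rfl
    have : Fintype.card F ≤ 2 := by
      rw [← Finset.card_univ]
      refine le_trans (Finset.card_le_card (t := {0, 1}) ?_) Finset.card_le_two
      intro x _
      by_cases hx : x = 0
      · simp [hx]
      · obtain ⟨n, hn⟩ := hω x hx
        rcases Nat.eq_zero_or_pos n with h | h
        · simp [hn, h]
        · rw [zero_pow (by omega)] at hn; exact absurd hn hx
    rw [hFq] at this
    have : 2 ^ 3 ≤ q ^ 3 := Nat.pow_le_pow_left hq 3
    omega
  have hωM : φ (ω ^ Mof s) = ω ^ Mof s := by
    rw [hφ, ← pow_mul]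
    have e : Mof s * q = Mof s * (q - 1) + Mof s := by
      obtain ⟨r, hr⟩ : ∃ r, q = r + 1 := ⟨q - 1, by omega⟩
      rw [hr]; simp only [Nat.add_sub_cancel]; ring
    rw [e, hM, ← hFq, pow_add, FiniteField.pow_card_sub_one_eq_one ω hω0, one_mul]
  have hred : ∀ n : ℕ, ∃ c : F, c ≠ 0 ∧ φ c = c ∧ ω ^ n = c * ω ^ (n % Mof s) := by
    intro n
    refine ⟨(ω ^ Mof s) ^ (n / Mof s), pow_ne_zero _ (pow_ne_zero _ hω0), ?_, ?_⟩
    · rw [map_pow, hωM]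
    · rw [← pow_mul, ← pow_add, Nat.div_add_mod]
  obtain ⟨hE, hK⟩ := T_E φ h3 q hq hφ hFq
  have hne : ∀ n : ℕ, ω ^ n ≠ 0 := fun n => pow_ne_zero _ hω0
  -- trichotomy
  have tri : ∀ x : F, x ≠ 0 → ((Tp φ x = 0 ∧ #(Ax φ x) = q - 1) ∨ (Tp φ x ≠ 0 ∧ #(Ax φ x) = 0) ∨
      (Tp φ x ≠ 0 ∧ #(Ax φ x) = 2 * (q - 1))) := by
    intro x hx
    by_cases h : Tp φ x = 0
    · left; exact ⟨h, by rw [card_Ax0 φ h3 x hx h, hE]⟩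
    · right
      have := card_Ax1 φ h3 x hx h
      rw [hE] at this
      tauto
  have m1 : ∀ j : ZMod (Mof s), j ∈ T1 s ω ↔ Tp φ (ω ^ j.val) = 0 := by
    intro j
    rw [T1, Set.mem_ofPred_eq, Sa_card φ h3 s hφ, ← hqdef]
    rcases tri _ (hne j.val) with h | h | h
    · simp [h.1, h.2]
    · simp only [h.1, h.2, iff_false]; omega
    · simp only [h.1, h.2, iff_false]; omega
  have m2 : ∀ j : ZMod (Mof s), j ∈ T2 s ω ↔ #(Ax φ (ω ^ j.val)) = 2 * (q - 1) := by
    intro j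
    rw [T2, Set.mem_ofPred_eq, Sa_card φ h3 s hφ, ← hqdef]
  have m3 : ∀ j : ZMod (Mof s), j ∈ T3 s ω ↔ #(Ax φ (ω ^ j.val)) = 0 := by
    intro j
    rw [T3, Set.mem_ofPred_eq, Sa_card φ h3 s hφ]
  rw [pair_card, pair_card, ← Finset.sum_sub_distrib]
  set b := ω ^ a.val with hb
  let g : F → ℤ := fun x => if Tp φ x = 0 then (#(Ax φ (b * x)) : ℤ) - (q - 1) else 0
  have hg : ∀ c x, c ≠ 0 → φ c = c → g (c * x) = g x := by
    intro c x h0 hc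
    simp only [g]
    rw [mul_left_comm, Ax_smul φ c _ h0 hc, Tp_smul _ _ _ hc]
    simp [h0]
  have hsum := sum_reps φ h3 q (Mof s) hq hφ hFq hM ω hred hω0 hω g hg
  have hshift : ∀ j : ZMod (Mof s), #(Ax φ (ω ^ (j + a).val)) = #(Ax φ (b * ω ^ j.val)) := by
    intro j
    obtain ⟨c, h0, hc, h⟩ := hred (j.val + a.val)
    rw [ZMod.val_add, hb, ← pow_add, add_comm a.val, h, Ax_smul φ c _ h0 hc]
  have hpt : ∀ j : ZMod (Mof s), ((q : ℤ) - 1) * ((if j ∈ T1 s ω ∧ j + a ∈ T2 s ω then 1 else 0) -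
      (if j ∈ T1 s ω ∧ j + a ∈ T3 s ω then 1 else 0)) = g (ω ^ j.val) := by
    intro j
    simp only [g, m1, m2, m3, hshift]
    by_cases h : Tp φ (ω ^ j.val) = 0
    · simp only [h, true_and, if_true]
      rcases tri _ (mul_ne_zero (hne a.val) (hne j.val)) with h | h | h
      · rw [← hb] at h
        rw [h.2, if_neg (by omega), if_neg (by omega), Nat.cast_sub (by omega)]
        simp
      · rw [← hb] at h
        rw [h.2, if_neg (by omega), if_pos rfl]
        push_cast; ring
      · rw [← hb] at h
        rw [h.2, if_pos rfl, if_neg (by omega), Nat.cast_mul, Nat.cast_sub (by omega)]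
        push_cast; ring
    · simp [h]
  have hmain := main_count φ h3 q hq hφ hFq b (hne _)
  have hc1 : #{v : F | v ≠ 0 ∧ Tp φ v = 0} = q ^ 2 - 1 := by
    have : ({v : F | v ≠ 0 ∧ Tp φ v = 0} : Finset F) = ({v : F | Tp φ v = 0} : Finset F).erase 0 := by
      ext x; simp
    rw [this, Finset.card_erase_of_mem (by simp), hK]
  have hR : ∑ x : F with x ≠ 0, g x = if Tp φ b = 0 then ((q : ℤ) - 1) * (q ^ 2 - q) else 0 := by
    simp only [g]
    rw [← Finset.sum_filter, Finset.filter_filter, Finset.sum_sub_distrib, hmain, Finset.sum_const, hc1,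
      nsmul_eq_mul, Nat.cast_sub (Nat.one_le_pow _ _ (by omega))]
    push_cast; ring
  have hq0 : ((q : ℤ) - 1) ≠ 0 := by
    have : (1 : ℤ) < q := by exact_mod_cast hq
    omega
  apply mul_left_cancel₀ hq0
  apply mul_left_cancel₀ hq0
  have hqc : (2 : ℤ) ^ s = q := by rw [hqdef]; push_cast; rfl
  rw [Finset.mul_sum, Finset.sum_congr rfl (fun j _ => hpt j), hsum, hR, hqc, Ind, m1]
  split_ifs <;> ring
end
end

section
/- For every a ∈ ℤ/Mℤ, #{(i, j) ∈ T_2 × T_3 : i − j = a} − #{(i, j) ∈ T_3 × T_3 : i − j = a} equals −2^{2s−1}·[a = 0] + 2^{s−1}·(1 − [a ∈ T_1]), where [P] is 1 if P holds and 0 otherwise; that is, (T_2 − T_3)·T_3^{(−1)} = −2^{2s−1} + 2^{s−1}(ℤ/Mℤ − T_1) in the group ring ℤ[ℤ/Mℤ]. -/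
noncomputable section

open scoped BigOperators

section Abstract

variable {G : Type*} [AddCommGroup G] [Fintype G] [DecidableEq G]

/-- number of representations -/
def rep9 (l : G → ℤ) (a : G) : ℤ := ∑ k, l k * l (a - k)

theorem ll9 (l : G → ℤ) (q : ℤ)
    (hD : ∀ d, ∑ i, l i * l (i + d) = 1 + q * (if d = 0 then 1 else 0)) (k a : G) :
    ∑ i, l (i - k) * l (i - a) = 1 + q * (if k = a then 1 else 0) := by
  rw [← Equiv.sum_comp (Equiv.addRight k)]
  have := hD (k - a)
  simp only [sub_eq_zero] at this
  rw [← this]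
  apply Finset.sum_congr rfl
  intro i _
  simp only [Equiv.coe_addRight, add_sub_cancel_right, add_sub_assoc]

theorem rep_sum9 (l : G → ℤ) (q : ℤ) (hl : ∑ i, l i = q + 1) :
    ∑ i, rep9 l i = (q + 1) ^ 2 := by
  unfold rep9
  rw [Finset.sum_comm]
  have : ∀ k, ∑ i, l k * l (i - k) = l k * (q + 1) := by
    intro k
    rw [← Finset.mul_sum, ← hl]
    congr 1
    exact Equiv.sum_comp (Equiv.subRight k) l
  simp only [this, ← Finset.sum_mul, hl]
  ring

theorem rep_l9 (l : G → ℤ) (q : ℤ) (hl : ∑ i, l i = q + 1)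
    (hD : ∀ d, ∑ i, l i * l (i + d) = 1 + q * (if d = 0 then 1 else 0)) (a : G) :
    ∑ i, rep9 l i * l (i - a) = (q + 1) + q * l a := by
  unfold rep9
  simp only [Finset.sum_mul]
  rw [Finset.sum_comm]
  have : ∀ k, ∑ i, l k * l (i - k) * l (i - a) = l k + q * (if k = a then l k else 0) := by
    intro k
    simp only [mul_assoc]
    rw [← Finset.mul_sum, ll9 l q hD]
    split_ifs <;> ring
  simp only [this, Finset.sum_add_distrib, ← Finset.mul_sum, hl]
  simp

theorem rep_rep9 (l : G → ℤ) (q : ℤ) (hl : ∑ i, l i = q + 1)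
    (hD : ∀ d, ∑ i, l i * l (i + d) = 1 + q * (if d = 0 then 1 else 0)) (a : G) :
    ∑ i, rep9 l i * rep9 l (i - a) = q ^ 2 * (if a = 0 then 1 else 0) + q + (q + 1) ^ 2 := by
  have h1 : ∀ i, rep9 l i * rep9 l (i - a) = ∑ k, l k * (l (i - k) * rep9 l (i - a)) := by
    intro i
    conv_lhs => rw [rep9]
    rw [Finset.sum_mul]
    simp only [mul_assoc]
  simp only [h1]
  rw [Finset.sum_comm]
  have h2 : ∀ k, ∑ i, l k * (l (i - k) * rep9 l (i - a)) = l k * (q + 1) + q * (l k * l (k - a)) := by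
    intro k
    rw [← Finset.mul_sum]
    have : ∑ i, l (i - k) * rep9 l (i - a) = (q + 1) + q * l (k - a) := by
      rw [← rep_l9 l q hl hD, ← Equiv.sum_comp (Equiv.addRight a)]
      apply Finset.sum_congr rfl
      intro i _
      simp only [Equiv.coe_addRight, add_sub_cancel_right]
      rw [mul_comm]
      congr 2
      abel
    rw [this]; ring
  simp only [h2, Finset.sum_add_distrib, ← Finset.sum_mul, ← Finset.mul_sum, hl]
  have h3 := hD (-a)
  simp only [← sub_eq_add_neg, neg_eq_zero] at h3
  rw [h3]
  ring

theorem parity9 (l : G → ℤ) (hl : ∀ i, l i = 0 ∨ l i = 1) (h2 : ∀ i, l (i + i) = l i)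
    (hb : Function.Bijective (fun i : G => i + i)) (a : G) : ((rep9 l a : ℤ) : ZMod 2) = l a := by
  obtain ⟨h, rfl⟩ := hb.2 a
  simp only
  unfold rep9
  push_cast
  rw [← Finset.add_sum_erase _ _ (Finset.mem_univ h)]
  have : ∑ x ∈ Finset.univ.erase h, (l x : ZMod 2) * (l (h + h - x) : ZMod 2) = 0 := by
    apply Finset.sum_involution (fun x _ => h + h - x)
    · intro x _
      rw [sub_sub_cancel, mul_comm (l (h + h - x) : ZMod 2)]
      exact CharTwo.add_self_eq_zero _
    · intro x hx _ he
      apply Finset.ne_of_mem_erase hx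
      apply hb.1
      simp only
      nth_rw 1 [← he]
      abel
    · intro x hx
      simp only [Finset.mem_erase, Finset.mem_univ, and_true]
      intro he
      apply Finset.ne_of_mem_erase hx
      have : x = h + h - (h + h - x) := by abel
      rw [this, he]; abel
    · intro x _
      simp
  rw [this, add_sub_cancel_right, add_zero, h2]
  rcases hl h with h0 | h0 <;> simp [h0]

theorem rep_vals9 (l : G → ℤ) (q : ℤ) (hl01 : ∀ i, l i = 0 ∨ l i = 1) (hl : ∑ i, l i = q + 1)
    (hD : ∀ d, ∑ i, l i * l (i + d) = 1 + q * (if d = 0 then 1 else 0))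
    (h2 : ∀ i, l (i + i) = l i)
    (hb : Function.Bijective (fun i : G => i + i)) (a : G) :
    (l a = 1 ∧ rep9 l a = 1) ∨ (l a = 0 ∧ (rep9 l a = 0 ∨ rep9 l a = 2)) := by
  have hs : ∑ i, (rep9 l i * (rep9 l i - 2) + l i) = 0 := by
    have e : ∀ i, rep9 l i * (rep9 l i - 2) + l i
        = rep9 l i * rep9 l (i - 0) - 2 * rep9 l i + l i := by
      intro i; rw [sub_zero]; ring
    simp only [e, Finset.sum_add_distrib, Finset.sum_sub_distrib, ← Finset.mul_sum,
      rep_rep9 l q hl hD, rep_sum9 l q hl, hl]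
    simp; ring
  have hnn : ∀ i, 0 ≤ rep9 l i := by
    intro i
    apply Finset.sum_nonneg
    intro k _
    rcases hl01 k with h | h <;> rcases hl01 (i - k) with h' | h' <;> simp [h, h']
  have hpar : ∀ i, (2 : ℤ) ∣ rep9 l i - l i := by
    intro i
    have := parity9 l hl01 h2 hb i
    rw [← sub_eq_zero] at this
    have h3 : ((rep9 l i - l i : ℤ) : ZMod 2) = 0 := by push_cast; exact this
    exact (ZMod.intCast_zmod_eq_zero_iff_dvd _ 2).1 h3
  have hpos : ∀ i ∈ Finset.univ, 0 ≤ rep9 l i * (rep9 l i - 2) + l i := by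
    intro i _
    rcases hl01 i with h | h
    · obtain ⟨c, hc⟩ := hpar i
      rw [h] at hc ⊢
      have h0 := hnn i
      have hc' : rep9 l i = 2 * c := by linarith
      rw [hc'] at h0 ⊢
      rcases eq_or_lt_of_le (show 0 ≤ c by omega) with h | h
      · rw [← h]; simp
      · nlinarith
    · rw [h]; nlinarith [sq_nonneg (rep9 l i - 1)]
  have hz := (Finset.sum_eq_zero_iff_of_nonneg hpos).1 hs a (Finset.mem_univ _)
  rcases hl01 a with h | h
  · right
    refine ⟨h, ?_⟩
    rw [h, add_zero, mul_eq_zero] at hz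
    rcases hz with h | h
    · exact Or.inl h
    · right; linarith
  · left
    refine ⟨h, ?_⟩
    rw [h] at hz
    have : (rep9 l a - 1) ^ 2 = 0 := by linarith
    have := pow_eq_zero_iff (two_ne_zero) |>.1 this
    linarith

theorem final9 (l : G → ℤ) (q : ℤ) (hl : ∑ i, l i = q + 1)
    (hD : ∀ d, ∑ i, l i * l (i + d) = 1 + q * (if d = 0 then 1 else 0))
    (hc : (Fintype.card G : ℤ) = q ^ 2 + q + 1) (a : G) :
    ∑ i, (rep9 l i - 1) * (2 - l (i - a) - rep9 l (i - a))
      = - q ^ 2 * (if a = 0 then 1 else 0) + q * (1 - l a) := by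
  have e : ∀ i, (rep9 l i - 1) * (2 - l (i - a) - rep9 l (i - a))
     = 2 * rep9 l i - rep9 l i * l (i - a) - rep9 l i * rep9 l (i - a) - 2
       + l (i - a) + rep9 l (i - a) := by intro i; ring
  have t1 : ∑ i, l (i - a) = q + 1 := by
    rw [← hl]; exact Equiv.sum_comp (Equiv.subRight a) l
  have t2 : ∑ i, rep9 l (i - a) = (q + 1) ^ 2 := by
    rw [← rep_sum9 l q hl]; exact Equiv.sum_comp (Equiv.subRight a) (rep9 l)
  simp only [e, Finset.sum_add_distrib, Finset.sum_sub_distrib, ← Finset.mul_sum,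
      rep_rep9 l q hl hD, rep_sum9 l q hl, rep_l9 l q hl hD, t1, t2, Finset.sum_const,
      Finset.card_univ, nsmul_eq_mul, hc]
  ring

end Abstract

section FieldPart

variable {F : Type*} [Field F]

theorem tr_eq9 (s : ℕ) (σ : F →+* F) (hσ : ∀ x, σ x = x ^ 2 ^ s) (x : F) :
    trFE s x = x + σ x + σ (σ x) := by
  rw [trFE, hσ (σ x), hσ, ← pow_mul, ← pow_add, two_mul]

theorem exists9 [CharP F 2] (σ : F →+* F) (h3 : ∀ x, σ (σ (σ x)) = x) (c : F) (hc : σ c ≠ c) :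
    ∃ x, x ≠ 0 ∧ x + σ x + σ (σ x) = 0 ∧ c * x + σ (c * x) + σ (σ (c * x)) = 0 := by
  have two : (2 : F) = 0 := CharTwo.two_eq_zero
  refine ⟨σ c + σ (σ c), ?_, ?_, ?_⟩
  · intro h
    apply hc
    have : σ (c + σ c) = σ 0 := by rw [map_add, map_zero, h]
    have := σ.injective this
    linear_combination this - c * two
  · simp only [map_add, h3]
    linear_combination (c + σ c + σ (σ c)) * two
  · simp only [map_add, map_mul, h3]
    linear_combination (c * σ c + c * σ (σ c) + σ c * σ (σ c)) * two

theorem unique9 [CharP F 2] (σ : F →+* F) (h3 : ∀ x, σ (σ (σ x)) = x) (c : F) (hc : σ c ≠ c)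
    (x y : F) (hx : x + σ x + σ (σ x) = 0) (hcx : c * x + σ (c * x) + σ (σ (c * x)) = 0)
    (hy : y + σ y + σ (σ y) = 0) (hcy : c * y + σ (c * y) + σ (σ (c * y)) = 0) :
    x * σ y = y * σ x := by
  have hne : c - σ (σ c) ≠ 0 := by
    intro h
    apply hc
    have : c = σ (σ c) := sub_eq_zero.1 h
    have h' := congrArg σ this
    rw [h3] at h'
    exact h'
  simp only [map_mul] at hcx hcy
  apply mul_left_cancel₀ hne
  linear_combination σ y * (hcx - σ (σ c) * hx) - σ x * (hcy - σ (σ c) * hy)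

theorem trfix9 (σ : F →+* F) (e : F) (he : e ≠ 0) (hf : σ e = e) (x : F) :
    e * x + σ (e * x) + σ (σ (e * x)) = 0 ↔ x + σ x + σ (σ x) = 0 := by
  simp only [map_mul, hf, ← mul_add, mul_eq_zero, he, false_or]

theorem conic9 (σ : F →+* F) (h3 : ∀ x, σ (σ (σ x)) = x) (u : F) (hu : u ≠ 0) :
    (σ u * u) + σ (σ u * u) + σ (σ (σ u * u)) = 0 ↔ u⁻¹ + σ u⁻¹ + σ (σ u⁻¹) = 0 := by
  have h1 : σ u ≠ 0 := by simpa using hu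
  have h2 : σ (σ u) ≠ 0 := by simpa using hu
  have : (σ u * u) + σ (σ u * u) + σ (σ (σ u * u))
      = (u * σ u * σ (σ u)) * (u⁻¹ + σ u⁻¹ + σ (σ u⁻¹)) := by
    simp only [map_mul, map_inv₀, h3]
    field_simp
    ring
  rw [this, mul_eq_zero]
  simp [hu]

end FieldPart

theorem ncard_sum9 {G : Type*} [AddCommGroup G] [Fintype G] (A B : Set G) (a : G) :
    (({p : G × G | p.1 ∈ A ∧ p.2 ∈ B ∧ p.1 - p.2 = a}.ncard : ℕ) : ℤ)
      = ∑ i, Ind (i ∈ A) * Ind (i - a ∈ B) := by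
  classical
  have : {p : G × G | p.1 ∈ A ∧ p.2 ∈ B ∧ p.1 - p.2 = a}
      = (fun i => (i, i - a)) '' {i | i ∈ A ∧ i - a ∈ B} := by
    ext ⟨x, y⟩
    simp only [Set.mem_ofPred_eq, Set.mem_image, Prod.mk.injEq]
    constructor
    · rintro ⟨h1, h2, rfl⟩
      exact ⟨x, ⟨h1, by simpa using h2⟩, rfl, by simp⟩
    · rintro ⟨i, ⟨h1, h2⟩, rfl, rfl⟩
      exact ⟨h1, h2, by simp⟩
  rw [this, Set.ncard_image_of_injective _ (fun x y h => (Prod.mk.inj h).1)]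
  have e : {i | i ∈ A ∧ i - a ∈ B} = ((Finset.univ.filter (fun i => i ∈ A ∧ i - a ∈ B) : Finset G) : Set G) := by
    ext; simp
  rw [e, Set.ncard_coe_finset, Finset.card_filter]
  push_cast
  apply Finset.sum_congr rfl
  intro i _
  unfold Ind
  by_cases h1 : i ∈ A <;> by_cases h2 : i - a ∈ B <;> simp [h1, h2]

theorem statement9 (s : ℕ) (hs : 1 ≤ s) (F : Type*) [Field F] [Fintype F]
    (hF : Fintype.card F = 2 ^ (3 * s)) (ω : F)
    (hω : ∀ x : F, x ≠ 0 → ∃ n : ℕ, x = ω ^ n) :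
    ∀ a : ZMod (Mof s),
      (({p : ZMod (Mof s) × ZMod (Mof s) | p.1 ∈ T2 s ω ∧ p.2 ∈ T3 s ω ∧ p.1 - p.2 = a}.ncard : ℤ) -
       ({p : ZMod (Mof s) × ZMod (Mof s) | p.1 ∈ T3 s ω ∧ p.2 ∈ T3 s ω ∧ p.1 - p.2 = a}.ncard : ℤ)) =
        -(2 ^ (2 * s - 1)) * Ind (a = 0) + 2 ^ (s - 1) * (1 - Ind (a ∈ T1 s ω)) := by
  classical
  have hq2 : 2 ≤ 2 ^ s := by
    calc 2 = 2 ^ 1 := rfl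
      _ ≤ 2 ^ s := Nat.pow_le_pow_right (by norm_num) hs
  have : Fact (Nat.Prime 2) := ⟨Nat.prime_two⟩
  have : CharP F 2 := charP_of_card_eq_prime_pow hF
  let σ : F →+* F := iterateFrobenius F 2 s
  have hσ : ∀ x, σ x = x ^ 2 ^ s := fun x => iterateFrobenius_def _ _ _
  have h3 : ∀ x, σ (σ (σ x)) = x := by
    intro x
    rw [hσ, hσ, hσ, ← pow_mul, ← pow_mul, ← pow_add, ← pow_add]
    have := FiniteField.pow_card x
    rw [hF] at this
    rwa [show s + (s + s) = 3 * s by ring] at *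
  have htr := tr_eq9 s σ hσ
  set q := 2 ^ s with hq
  have hM : Mof s = q ^ 2 + q + 1 := by
    simp only [Mof, hq, ← pow_mul, mul_comm 2 s]
  have hcard : Fintype.card F = q ^ 3 := by rw [hF, hq, ← pow_mul, mul_comm]
  have hω0 : ω ≠ 0 := by
    intro h0
    have : Fintype.card F ≤ 2 := by
      rw [← Finset.card_univ]
      refine (Finset.card_le_card (t := {0, 1}) ?_).trans Finset.card_le_two
      intro x _
      by_cases hx : x = 0
      · simp [hx]
      · obtain ⟨n, hn⟩ := hω x hx
        rw [h0] at hn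
        rcases Nat.eq_zero_or_pos n with h | h
        · subst h; simp [hn]
        · rw [zero_pow h.ne'] at hn; exact absurd hn hx
    rw [hcard] at this
    have := Nat.pow_le_pow_left hq2 3
    omega
  have hord : orderOf ω = (q - 1) * Mof s := by
    have h1 : orderOf (Units.mk0 ω hω0) = Nat.card Fˣ := by
      apply orderOf_eq_card_of_forall_mem_zpowers
      intro x
      obtain ⟨n, hn⟩ := hω x x.ne_zero
      exact ⟨n, by ext; simp [hn]⟩
    rw [← orderOf_units, Units.val_mk0, Nat.card_eq_fintype_card, Fintype.card_units, hcard] at h1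
    rw [h1, hM]
    obtain ⟨r, hr⟩ := Nat.exists_eq_add_of_le hq2
    rw [hr]
    have : (2 + r) ^ 3 = (2 + r - 1) * ((2 + r) ^ 2 + (2 + r) + 1) + 1 := by
      rw [show 2 + r - 1 = r + 1 by omega]; ring
    omega
  have hone : ∀ m : ℤ, ω ^ m = 1 ↔ (orderOf ω : ℤ) ∣ m := by
    intro m
    have h := orderOf_dvd_iff_zpow_eq_one (x := Units.mk0 ω hω0) (i := m)
    rw [← orderOf_units, Units.val_mk0] at h
    rw [h, Units.ext_iff]
    simp
  have hfix : ∀ k : ℤ, σ (ω ^ k) = ω ^ k ↔ (Mof s : ℤ) ∣ k := by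
    intro k
    rw [hσ]
    have hk : ω ^ k ≠ 0 := zpow_ne_zero _ hω0
    have h1 : (ω ^ k) ^ q = ω ^ k * ω ^ (k * (q - 1 : ℕ)) := by
      rw [← zpow_natCast, ← zpow_mul, ← zpow_add₀ hω0]
      congr 1
      rw [Nat.cast_sub (by omega)]; push_cast; ring
    rw [h1, mul_eq_left₀ hk, hone, hord]
    push_cast
    rw [mul_comm]
    apply Int.mul_dvd_mul_iff_right
    omega
  have : NeZero (Mof s) := ⟨by simp [Mof]⟩
  let τ : F → F := fun x => x + σ x + σ (σ x)
  let L : Set (ZMod (Mof s)) := {i | τ (ω ^ (i.val : ℤ)) = 0}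
  have hL : ∀ k : ℤ, ((k : ZMod (Mof s)) ∈ L ↔ τ (ω ^ k) = 0) := by
    intro k
    have h1 : (Mof s : ℤ) ∣ ((k : ZMod (Mof s)).val : ℤ) - k := by
      rw [← ZMod.intCast_zmod_eq_zero_iff_dvd]
      simp
    have h2 := trfix9 σ _ (zpow_ne_zero _ hω0) ((hfix _).2 h1) (ω ^ k)
    rw [← zpow_add₀ hω0, sub_add_cancel] at h2
    exact h2
  have hrep : ∀ i : ZMod (Mof s), ∃ k : ℤ, (k : ZMod (Mof s)) = i := fun i => ⟨i.val, by simp⟩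
  have hpow : ∀ x : F, x ≠ 0 → ∃ k : ℤ, x = ω ^ k := by
    intro x hx
    obtain ⟨n, hn⟩ := hω x hx
    exact ⟨n, by simpa using hn⟩
  have hD0 : ∀ d : ZMod (Mof s), d ≠ 0 → ∃! i, i ∈ L ∧ i + d ∈ L := by
    intro d hd
    obtain ⟨k, rfl⟩ := hrep d
    have hk : σ (ω ^ k) ≠ ω ^ k := by
      intro h
      rw [hfix, ← ZMod.intCast_zmod_eq_zero_iff_dvd] at h
      exact hd h
    obtain ⟨x, hx0, hx1, hx2⟩ := exists9 σ h3 _ hk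
    obtain ⟨m, rfl⟩ := hpow x hx0
    refine ⟨(m : ZMod (Mof s)), ⟨(hL m).2 hx1, ?_⟩, ?_⟩
    · rw [← Int.cast_add, hL, add_comm, zpow_add₀ hω0]; exact hx2
    · rintro j ⟨hj1, hj2⟩
      obtain ⟨n, rfl⟩ := hrep j
      rw [hL] at hj1
      rw [← Int.cast_add, hL, add_comm, zpow_add₀ hω0] at hj2
      have := unique9 σ h3 _ hk _ _ hx1 hx2 hj1 hj2
      rw [← sub_eq_zero, ← Int.cast_sub, ZMod.intCast_zmod_eq_zero_iff_dvd, ← hfix,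
        zpow_sub₀ hω0, map_div₀, div_eq_div_iff]
      · rw [mul_comm, this]
      · rw [map_ne_zero]; exact zpow_ne_zero _ hω0
      · exact zpow_ne_zero _ hω0
  let l : ZMod (Mof s) → ℤ := fun i => Ind (i ∈ L)
  have hl1 : ∀ i, i ∈ L → l i = 1 := fun i h => by simp [l, Ind, h]
  have hl0 : ∀ i, i ∉ L → l i = 0 := fun i h => by simp [l, Ind, h]
  have hl01 : ∀ i, l i = 0 ∨ l i = 1 := fun i => by
    by_cases h : i ∈ L
    · exact Or.inr (hl1 i h)
    · exact Or.inl (hl0 i h)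
  have hDne : ∀ d, d ≠ 0 → ∑ i, l i * l (i + d) = 1 := by
    intro d hd
    obtain ⟨i, ⟨h1, h2⟩, hu⟩ := hD0 d hd
    rw [Finset.sum_eq_single i, hl1 _ h1, hl1 _ h2, mul_one]
    · intro j _ hj
      by_cases hj1 : j ∈ L
      · by_cases hj2 : j + d ∈ L
        · exact absurd (hu j ⟨hj1, hj2⟩) hj
        · rw [hl0 _ hj2, mul_zero]
      · rw [hl0 _ hj1, zero_mul]
    · simp
  have hsq : ∀ i, l i * l i = l i := fun i => by rcases hl01 i with h | h <;> simp [h]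
  have hcG : (Fintype.card (ZMod (Mof s)) : ℤ) = (q : ℤ) ^ 2 + q + 1 := by
    rw [ZMod.card, hM]; push_cast; ring
  have hl : ∑ i, l i = (q : ℤ) + 1 := by
    have h1 : ∑ d, ∑ i, l i * l (i + d) = (∑ i, l i) * (∑ i, l i) := by
      rw [Finset.sum_comm, Finset.sum_mul]
      apply Finset.sum_congr rfl
      intro i _
      rw [← Finset.mul_sum]
      congr 1
      exact Equiv.sum_comp (Equiv.addLeft i) l
    rw [← Finset.add_sum_erase _ _ (Finset.mem_univ 0),
      Finset.sum_congr rfl (fun d hd => hDne d (Finset.ne_of_mem_erase hd))] at h1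
    simp only [add_zero, hsq, Finset.sum_const, nsmul_eq_mul, mul_one,
      Finset.card_erase_of_mem (Finset.mem_univ _), Finset.card_univ] at h1
    rw [Nat.cast_sub Fintype.card_pos, hcG] at h1
    have hn : 0 ≤ ∑ i, l i := Finset.sum_nonneg (fun i _ => by rcases hl01 i with h | h <;> simp [h])
    have h2 : (∑ i, l i - (q + 1)) * (∑ i, l i + q) = 0 := by
      push_cast at h1
      linarith
    rcases mul_eq_zero.1 h2 with h | h
    · linarith
    · have : (2 : ℤ) ≤ q := by exact_mod_cast hq2
      linarith
  have hD : ∀ d, ∑ i, l i * l (i + d) = 1 + (q : ℤ) * (if d = 0 then 1 else 0) := by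
    intro d
    by_cases hd : d = 0
    · subst hd
      simp only [add_zero, hsq, hl, if_true]; ring
    · rw [hDne d hd, if_neg hd]; ring
  have hMul2 : ∀ i, l (i + i) = l i := by
    intro i
    have : i + i ∈ L ↔ i ∈ L := by
      obtain ⟨k, rfl⟩ := hrep i
      rw [← Int.cast_add, hL, hL, zpow_add₀ hω0]
      have : τ (ω ^ k * ω ^ k) = τ (ω ^ k) ^ 2 := by
        simp only [τ, map_mul]
        rw [CharTwo.add_sq, CharTwo.add_sq]
        ring
      rw [this]
      simp
    simp only [l, this]
  have hbij : Function.Bijective (fun i : ZMod (Mof s) => i + i) := by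
    apply Finite.injective_iff_bijective.1
    intro x y hxy
    simp only [← two_mul] at hxy
    have hu : IsUnit ((2 : ℕ) : ZMod (Mof s)) := by
      rw [ZMod.isUnit_iff_coprime, hM, Nat.coprime_two_left]
      have : Even q := by rw [hq]; exact (Nat.even_pow.2 ⟨even_two, by omega⟩)
      exact ((this.pow_of_ne_zero two_ne_zero).add this).add_one
    exact hu.mul_left_cancel (by exact_mod_cast hxy)
  have hvals := rep_vals9 l q hl01 hl hD hMul2 hbij
  have hSa : ∀ a : ZMod (Mof s), ((Sa s ω (a.val : ℤ)).ncard : ℤ) = (q - 1) * rep9 l a := by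
    intro a
    have hN : rep9 l a = (({k | k ∈ L ∧ a - k ∈ L} : Set (ZMod (Mof s))).ncard : ℤ) := by
      have e : {k | k ∈ L ∧ a - k ∈ L}
          = ((Finset.univ.filter (fun k => k ∈ L ∧ a - k ∈ L) : Finset (ZMod (Mof s))) :
            Set (ZMod (Mof s))) := by
        ext; simp
      rw [e, Set.ncard_coe_finset, Finset.card_filter, rep9]
      push_cast
      apply Finset.sum_congr rfl
      intro k _
      by_cases h1 : k ∈ L
      · by_cases h2 : a - k ∈ L
        · rw [hl1 _ h1, hl1 _ h2, if_pos ⟨h1, h2⟩, mul_one]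
        · rw [hl0 _ h2, if_neg (fun h => h2 h.2), mul_zero]
      · rw [hl0 _ h1, if_neg (fun h => h1 h.1), zero_mul]
    let f : Fin (q - 1) × ZMod (Mof s) → F :=
      fun p => ω ^ (-(p.2.val : ℤ) + (Mof s : ℤ) * ((p.1 : ℕ) : ℤ))
    have hM0 : (Mof s : ℤ) ≠ 0 := by exact_mod_cast NeZero.ne (Mof s)
    have hinj : Function.Injective f := by
      rintro ⟨t, i⟩ ⟨t', i'⟩ h
      simp only [f] at h
      have h1 : ω ^ ((-(i.val : ℤ) + (Mof s : ℤ) * ((t : ℕ) : ℤ))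
          - (-(i'.val : ℤ) + (Mof s : ℤ) * ((t' : ℕ) : ℤ))) = 1 := by
        rw [zpow_sub₀ hω0, h, div_self (zpow_ne_zero _ hω0)]
      rw [hone, hord] at h1
      push_cast at h1
      have h2 : (Mof s : ℤ) ∣ (-(i.val : ℤ) + (Mof s : ℤ) * ((t : ℕ) : ℤ))
          - (-(i'.val : ℤ) + (Mof s : ℤ) * ((t' : ℕ) : ℤ)) :=
        (Dvd.intro_left _ rfl).trans h1
      rw [← ZMod.intCast_zmod_eq_zero_iff_dvd] at h2
      have h3 : i = i' := by
        push_cast at h2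
        simp only [ZMod.natCast_val, ZMod.cast_id', id_eq] at h2
        have hz : ((2 ^ (2 * s) + 2 ^ s + 1 : ℕ) : ZMod (Mof s)) = 0 := ZMod.natCast_self _
        push_cast at hz
        rw [hz] at h2
        linear_combination -h2
      subst h3
      have h4 : (Mof s : ℤ) * ((q - 1 : ℕ) : ℤ) ∣ (Mof s : ℤ) * (((t : ℕ) : ℤ) - ((t' : ℕ) : ℤ)) := by
        convert h1 using 1
        · push_cast; ring
        · push_cast; ring
      rw [Int.mul_dvd_mul_iff_left hM0] at h4
      have h5 := Int.eq_zero_of_abs_lt_dvd h4 (by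
        have := t.2
        have := t'.2
        rw [abs_lt]; constructor <;> omega)
      have : t = t' := by ext; omega
      rw [this]
    have himg : Sa s ω (a.val : ℤ) = f '' (Set.univ ×ˢ {k | k ∈ L ∧ a - k ∈ L}) := by
      have hmem : ∀ m : ℤ, ω ^ m ∈ Sa s ω (a.val : ℤ) ↔
          ((-m : ℤ) : ZMod (Mof s)) ∈ L ∧ a - ((-m : ℤ) : ZMod (Mof s)) ∈ L := by
        intro m
        have e1 : a - ((-m : ℤ) : ZMod (Mof s)) = (((a.val : ℤ) + m : ℤ) : ZMod (Mof s)) := by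
          rw [Int.cast_neg, Int.cast_add, Int.cast_natCast, ZMod.natCast_zmod_val]; ring
        rw [e1, hL, hL, Sa, Set.mem_ofPred_eq, htr, htr, ← zpow_add₀ hω0, pow_succ, ← hσ,
          conic9 σ h3 _ (zpow_ne_zero _ hω0), zpow_neg]
        simp only [ne_eq, zpow_ne_zero m hω0, not_false_eq_true, true_and, τ]
      ext u
      constructor
      · intro hu
        obtain ⟨m, rfl⟩ := hpow u hu.1
        have hm := (hmem m).1 hu
        set i : ZMod (Mof s) := ((-m : ℤ) : ZMod (Mof s)) with hi
        have h1 : (Mof s : ℤ) ∣ m + i.val := by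
          rw [← ZMod.intCast_zmod_eq_zero_iff_dvd, Int.cast_add, Int.cast_natCast,
            ZMod.natCast_zmod_val, hi]
          simp
        obtain ⟨c, hc⟩ := h1
        have hr0 : 0 ≤ c % ((q - 1 : ℕ) : ℤ) := Int.emod_nonneg _ (by omega)
        have hr1 : c % ((q - 1 : ℕ) : ℤ) < ((q - 1 : ℕ) : ℤ) := Int.emod_lt_of_pos _ (by omega)
        refine ⟨(⟨(c % ((q - 1 : ℕ) : ℤ)).toNat, by omega⟩, i), ⟨Set.mem_univ _, hm⟩, ?_⟩
        simp only [f]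
        rw [Int.toNat_of_nonneg hr0]
        have h2 : m = (-(i.val : ℤ) + (Mof s : ℤ) * (c % ((q - 1 : ℕ) : ℤ)))
            + (((q - 1) * Mof s : ℕ) : ℤ) * (c / ((q - 1 : ℕ) : ℤ)) := by
          have h := Int.emod_add_mul_ediv c ((q - 1 : ℕ) : ℤ)
          rw [Nat.cast_mul]
          linear_combination hc - (Mof s : ℤ) * h
        have h3 : ω ^ ((((q - 1) * Mof s : ℕ) : ℤ) * (c / ((q - 1 : ℕ) : ℤ))) = 1 := by
          rw [hone, hord]; exact Dvd.intro _ rfl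
        conv_rhs => rw [h2, zpow_add₀ hω0, h3, mul_one]
      · rintro ⟨⟨t, i⟩, ⟨-, hi⟩, rfl⟩
        simp only [f]
        rw [hmem]
        have : ((-(-(i.val : ℤ) + (Mof s : ℤ) * ((t : ℕ) : ℤ)) : ℤ) : ZMod (Mof s)) = i := by
          rw [Int.cast_neg, Int.cast_add, Int.cast_neg, Int.cast_mul, Int.cast_natCast,
            Int.cast_natCast, ZMod.natCast_zmod_val, ZMod.natCast_self]
          ring
        rw [this]
        exact hi
    rw [himg, Set.ncard_image_of_injective _ hinj, Set.ncard_prod, hN, Set.ncard_univ,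
      Nat.card_eq_fintype_card, Fintype.card_fin, Nat.cast_mul, Nat.cast_sub (by omega)]
    push_cast
    rfl
  have hq1 : (1 : ℤ) ≤ q - 1 := by
    have : (2 : ℤ) ≤ q := by exact_mod_cast hq2
    linarith
  have hqc : ((2 ^ s - 1 : ℕ) : ℤ) = q - 1 := by
    rw [Nat.cast_sub (by omega)]; push_cast [hq]; rfl
  have m1 : ∀ a, a ∈ T1 s ω ↔ rep9 l a = 1 := by
    intro a
    rw [T1, Set.mem_ofPred_eq, ← Nat.cast_inj (R := ℤ), hSa, hqc]
    exact mul_eq_left₀ (by linarith)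
  have m2 : ∀ a, a ∈ T2 s ω ↔ rep9 l a = 2 := by
    intro a
    rw [T2, Set.mem_ofPred_eq, ← Nat.cast_inj (R := ℤ), hSa, Nat.cast_mul, hqc, mul_comm]
    exact mul_left_inj' (by linarith)
  have m3 : ∀ a, a ∈ T3 s ω ↔ rep9 l a = 0 := by
    intro a
    rw [T3, Set.mem_ofPred_eq, ← Nat.cast_inj (R := ℤ), hSa, Nat.cast_zero, mul_eq_zero]
    have : (q : ℤ) - 1 ≠ 0 := by linarith
    simp [this]
  intro a
  rw [ncard_sum9, ncard_sum9, ← Finset.sum_sub_distrib]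
  have i1 : Ind (a ∈ T1 s ω) = l a := by
    unfold Ind
    rw [m1]
    rcases hvals a with ⟨h, h'⟩ | ⟨h, h' | h'⟩ <;> simp [h, h']
  have i3 : ∀ j, 2 * Ind (j ∈ T3 s ω) = 2 - l j - rep9 l j := by
    intro j
    unfold Ind
    rw [m3]
    rcases hvals j with ⟨h, h'⟩ | ⟨h, h' | h'⟩ <;> simp [h, h']
  have i23 : ∀ j, Ind (j ∈ T2 s ω) - Ind (j ∈ T3 s ω) = rep9 l j - 1 := by
    intro j
    unfold Ind
    rw [m3, m2]
    rcases hvals j with ⟨h, h'⟩ | ⟨h, h' | h'⟩ <;> simp [h, h']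
  have key := final9 l q hl hD hcG a
  have e1 : ∑ i, (rep9 l i - 1) * (2 - l (i - a) - rep9 l (i - a))
     = 2 * ∑ i, (Ind (i ∈ T2 s ω) * Ind (i - a ∈ T3 s ω) - Ind (i ∈ T3 s ω) * Ind (i - a ∈ T3 s ω)) := by
    rw [Finset.mul_sum]
    apply Finset.sum_congr rfl
    intro i _
    rw [← i23, ← i3]; ring
  have e2 : Ind (a = 0) = if a = 0 then 1 else 0 := by
    unfold Ind
    by_cases h : a = 0 <;> simp [h]
  have e3 : (2 : ℤ) * 2 ^ (2 * s - 1) = (q : ℤ) ^ 2 := by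
    rw [← pow_succ', show 2 * s - 1 + 1 = s * 2 by omega, pow_mul, hq]; push_cast; rfl
  have e4 : (2 : ℤ) * 2 ^ (s - 1) = q := by
    rw [← pow_succ', show s - 1 + 1 = s by omega, hq]; push_cast; rfl
  rw [e1, ← e2, ← i1, ← e3, ← e4] at key
  linarith
end
end
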